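/- arXiv:1811.03693 — 2 statements merged into one kernel-verified Lean document; each statement's English description precedes it below -/
import Mathlib

section
/- Let d ∈ {2,3}. For every α ∈ (0,1) there exists a constant C = C(α,d) > 0 such that the following holds for all ε > 0 and M₁, M₂ ≥ 0. Let Ū : 𝕋^d → ℝ satisfy sup_x |Ū(x)| ≤ M₁ and ‖Ū‖_{C^{0,α}(𝕋^d)} ≤ M₂, and let Û ∈ C²(𝕋^d) satisfy ε² Δ Û = e^{Ū+Û} − 1 pointwise on 𝕋^d. Then the second derivatives of Û are α-Hölder continuous and ‖Û‖_{C^{2,α}(𝕋^d)} ≤ [ M₂ + C ε^{−2} ( e^{2 M₁} + 1 ) ] · exp[ C ε^{−2} ( e^{2 M₁} + 1 ) ]. -/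
open MeasureTheory Real Set
open scoped ENNReal

noncomputable section

/-- The fundamental domain `[0,1)^d` of the flat torus `𝕋^d = ℝ^d/ℤ^d`. -/
def Tcube (d : ℕ) : Set (Fin d → ℝ) := Set.univ.pi fun _ => Set.Ico (0:ℝ) 1

/-- The Haar (Lebesgue) probability measure on the torus `𝕋^d`, realised as Lebesgue
measure restricted to the fundamental domain `[0,1)^d`. -/
def torusMeasure (d : ℕ) : Measure (Fin d → ℝ) := volume.restrict (Tcube d)

/-- The Euclidean norm on `ℝ^d`. -/
def euclNorm {d : ℕ} (v : Fin d → ℝ) : ℝ := Real.sqrt (∑ i, (v i) ^ 2)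

/-- The lattice vector in `ℝ^d` associated to `k ∈ ℤ^d`. -/
def latVec {d : ℕ} (k : Fin d → ℤ) : Fin d → ℝ := fun i => (k i : ℝ)

/-- `ℤ^d`-periodicity of a function on `ℝ^d`; such functions are exactly the functions
on the torus `𝕋^d`. -/
def ZPeriodic {d : ℕ} {α : Type*} (f : (Fin d → ℝ) → α) : Prop :=
  ∀ (x : Fin d → ℝ) (k : Fin d → ℤ), f (x + latVec k) = f x

/-- The quotient (flat) metric on the torus `𝕋^d`, expressed on representatives in `ℝ^d`. -/
def tdist {d : ℕ} (x y : Fin d → ℝ) : ℝ := ⨅ k : Fin d → ℤ, euclNorm (x - y + latVec k)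

/-- The gradient of a scalar function on `ℝ^d`, as an `ℝ^d`-valued function. -/
def grad {d : ℕ} (U : (Fin d → ℝ) → ℝ) (x : Fin d → ℝ) : Fin d → ℝ :=
  fun i => fderiv ℝ U x (Pi.single i 1)

/-- The Laplacian: the sum of the second partial derivatives. -/
def lap {d : ℕ} (U : (Fin d → ℝ) → ℝ) (x : Fin d → ℝ) : ℝ :=
  ∑ i, fderiv ℝ (fun y => fderiv ℝ U y (Pi.single i 1)) x (Pi.single i 1)

/-- The Hessian matrix of second partial derivatives. -/
def hess {d : ℕ} (U : (Fin d → ℝ) → ℝ) (x : Fin d → ℝ) : Fin d → Fin d → ℝ :=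
  fun i j => fderiv ℝ (fun y => fderiv ℝ U y (Pi.single j 1)) x (Pi.single i 1)

/-- Frobenius (Euclidean) norm of a `d × d` matrix. -/
def frobNorm {d : ℕ} (M : Fin d → Fin d → ℝ) : ℝ := Real.sqrt (∑ i, ∑ j, (M i j) ^ 2)

/-- Euclidean dot product on `ℝ^d`. -/
def dotP {d : ℕ} (v w : Fin d → ℝ) : ℝ := ∑ i, v i * w i

/-- `HolderBnd α u K` expresses that the Hölder norm `‖u‖_{C^{0,α}(𝕋^d)}`, i.e. the sup
norm plus the `α`-Hölder seminorm with respect to the torus metric, is at most `K`. -/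
def HolderBnd {d : ℕ} (α : ℝ) (u : (Fin d → ℝ) → ℝ) (K : ℝ) : Prop :=
  ∃ A B : ℝ, 0 ≤ A ∧ 0 ≤ B ∧ A + B ≤ K ∧ (∀ x, |u x| ≤ A) ∧
    ∀ x y, |u x - u y| ≤ B * tdist x y ^ α

/-- Hölder norm bound for an `ℝ^d`-valued function, with the Euclidean norm on values. -/
def HolderBndVec {d : ℕ} (α : ℝ) (G : (Fin d → ℝ) → Fin d → ℝ) (K : ℝ) : Prop :=
  ∃ A B : ℝ, 0 ≤ A ∧ 0 ≤ B ∧ A + B ≤ K ∧ (∀ x, euclNorm (G x) ≤ A) ∧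
    ∀ x y, euclNorm (G x - G y) ≤ B * tdist x y ^ α

/-- Hölder norm bound for a matrix-valued function. -/
def HolderBndMat {d : ℕ} (α : ℝ) (M : (Fin d → ℝ) → Fin d → Fin d → ℝ) (K : ℝ) : Prop :=
  ∃ A B : ℝ, 0 ≤ A ∧ 0 ≤ B ∧ A + B ≤ K ∧ (∀ x, frobNorm (M x) ≤ A) ∧
    ∀ x y, frobNorm (M x - M y) ≤ B * tdist x y ^ α

/-- `C1Bnd α u K` expresses `‖u‖_{C^{1,α}(𝕋^d)} ≤ K` (the `C^{0,α}` norm of `u` plus the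
`C^{0,α}` norm of its gradient is at most `K`). -/
def C1Bnd {d : ℕ} (α : ℝ) (u : (Fin d → ℝ) → ℝ) (K : ℝ) : Prop :=
  ∃ K₀ K₁ : ℝ, 0 ≤ K₀ ∧ 0 ≤ K₁ ∧ K₀ + K₁ ≤ K ∧
    HolderBnd α u K₀ ∧ HolderBndVec α (grad u) K₁

/-- `C2Bnd α u K` expresses that the second derivatives of `u` are `α`-Hölder continuous
and `‖u‖_{C^{2,α}(𝕋^d)} ≤ K`. -/
def C2Bnd {d : ℕ} (α : ℝ) (u : (Fin d → ℝ) → ℝ) (K : ℝ) : Prop :=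
  ∃ K₀ K₁ K₂ : ℝ, 0 ≤ K₀ ∧ 0 ≤ K₁ ∧ 0 ≤ K₂ ∧ K₀ + K₁ + K₂ ≤ K ∧
    HolderBnd α u K₀ ∧ HolderBndVec α (grad u) K₁ ∧ HolderBndMat α (hess u) K₂

/-- A coupling of two measures: a measure on the product whose marginals are `μ` and `ν`. -/
def IsCoupling {X : Type*} [MeasurableSpace X] (cpl : Measure (X × X)) (μ ν : Measure X) : Prop :=
  cpl.map Prod.fst = μ ∧ cpl.map Prod.snd = ν

/-- `W_q^q`: the `q`-th power of the Wasserstein distance of order `q` on the torus,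
defined as the infimum over couplings of the integral of the `q`-th power of the torus
distance. -/
def WassPow {d : ℕ} (q : ℝ) (μ ν : Measure (Fin d → ℝ)) : ℝ :=
  sInf { c | ∃ cpl : Measure ((Fin d → ℝ) × (Fin d → ℝ)), IsProbabilityMeasure cpl ∧
    IsCoupling cpl μ ν ∧ c = ∫ z, tdist z.1 z.2 ^ q ∂cpl }

/-- The Wasserstein distance of order `p` on the torus. -/
def Wass {d : ℕ} (p : ℝ) (μ ν : Measure (Fin d → ℝ)) : ℝ :=
  sInf { c | ∃ cpl : Measure ((Fin d → ℝ) × (Fin d → ℝ)), IsProbabilityMeasure cpl ∧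
    IsCoupling cpl μ ν ∧ c = (∫ z, tdist z.1 z.2 ^ p ∂cpl) ^ (1/p) }

/-- The measure `h dx` on the torus associated to a density `h`. -/
def densMeasure {d : ℕ} (h : (Fin d → ℝ) → ℝ) : Measure (Fin d → ℝ) :=
  (torusMeasure d).withDensity fun x => ENNReal.ofReal (h x)

/-- The `L^p(𝕋^d)` norm (as a real number). -/
def LpNorm {d : ℕ} (p : ℝ≥0∞) (u : (Fin d → ℝ) → ℝ) : ℝ :=
  (eLpNorm u p (torusMeasure d)).toReal

/-- `U` is a weak solution of `ε² Δ U = g` on the torus: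
`ε² ∫ ∇U·∇φ dx = −∫ g φ dx` for every smooth (periodic) test function `φ`. -/
def IsWeakPoisson {d : ℕ} (ε : ℝ) (U g : (Fin d → ℝ) → ℝ) : Prop :=
  ∀ φ : (Fin d → ℝ) → ℝ, ContDiff ℝ (⊤ : ℕ∞) φ → ZPeriodic φ →
    ε ^ 2 * ∫ x, dotP (grad U x) (grad φ x) ∂(torusMeasure d) =
      - ∫ x, g x * φ x ∂(torusMeasure d)

end
noncomputable section

/-- The rescaled mollifier `χ_r(x) = r^{-d} χ(x/r)` on `ℝ^d`. -/
def scaledMollifier {d : ℕ} (χ : (Fin d → ℝ) → ℝ) (r : ℝ) (x : Fin d → ℝ) : ℝ :=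
  (r ^ d)⁻¹ * χ (fun i => x i / r)

/-- The `ℤ^d`-periodisation of a function on `ℝ^d`, giving a function on the torus. -/
def periodised {d : ℕ} (g : (Fin d → ℝ) → ℝ) (x : Fin d → ℝ) : ℝ :=
  ∑' k : Fin d → ℤ, g (x + latVec k)

/-- The measure `χ_r ∗ μ` on the torus: the measure with density
`x ↦ ∫ χ_r(x − y) dμ(y)` with respect to the Haar measure (with `χ_r` periodised). -/
def mollifyMeasure {d : ℕ} (χ : (Fin d → ℝ) → ℝ) (r : ℝ) (μ : Measure (Fin d → ℝ)) :
    Measure (Fin d → ℝ) :=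
  (torusMeasure d).withDensity fun x =>
    ENNReal.ofReal (∫ y, periodised (scaledMollifier χ r) (x - y) ∂μ)

/-- A Borel probability measure on the torus `𝕋^d`, realised as a probability measure on
`ℝ^d` carried by the fundamental domain. -/
def IsTorusProb {d : ℕ} (μ : Measure (Fin d → ℝ)) : Prop :=
  IsProbabilityMeasure μ ∧ μ (Tcube d)ᶜ = 0

/-- The set `A_d` of allowed Hölder exponents: `(0,1)` if `d = 2`, `(0,1/5]` if `d = 3`. -/
def Aset (d : ℕ) : Set ℝ := if d = 2 then Set.Ioo 0 1 else Set.Ioc 0 (1/5)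

end

/-
By the maximum principle `|Û| ≤ sup |Ū|`, so the forcing `e^{Ū+Û} − 1` is as Hölder continuous as
`Ū + Û`, with constant `e^{2M₁}`.

For the Schauder estimate, let `φ` be a radial kernel of mass one, `∇ψ(y) = y φ(y)`, and average
`∂ᵢ∂ⱼu` against `φ` at scale `r`. Integrating by parts, the `r`-derivative of this average is `−r⁻¹`
times the average of `Δu` against the mean-zero kernel `∂ⱼ∂ᵢψ`, hence `O(r^{α−1})`; its difference
between two points `x`, `y` is `O(|x − y| r^{α−2})`. Integrating the first bound over
`0 < r < |x − y|` and the second over `r > |x − y|` gives `[∂ᵢ∂ⱼu]_α ≤ S [Δu]_α`.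

The Hölder seminorm of the forcing involves `sup |∇Û|`, which is absorbed by interpolation between
`sup |Û|` and `sup |D²Û|`. What remains is `M₂` times a quadratic polynomial in `ε⁻² e^{2M₁}`, which
the exponential dominates.
-/

section OneVariable

lemma abs_sub_le_sub_of_abs_deriv_le {f g f' g' : ℝ → ℝ} {a b : ℝ} (hab : a ≤ b)
    (hf : ContinuousOn f (Icc a b)) (hg : ContinuousOn g (Icc a b))
    (hf' : ∀ t ∈ Ioo a b, HasDerivAt f (f' t) t) (hg' : ∀ t ∈ Ioo a b, HasDerivAt g (g' t) t)
    (hle : ∀ t ∈ Ioo a b, |f' t| ≤ g' t) : |f b - f a| ≤ g b - g a := by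
  have hsub : MonotoneOn (fun t => g t - f t) (Icc a b) :=
    monotoneOn_of_hasDerivWithinAt_nonneg (convex_Icc a b) (hg.sub hf)
      (fun t ht => by
        rw [interior_Icc] at ht
        exact ((hg' t ht).sub (hf' t ht)).hasDerivWithinAt)
      (fun t ht => by
        rw [interior_Icc] at ht
        exact sub_nonneg.2 (abs_le.1 (hle t ht)).2)
  have hadd : MonotoneOn (fun t => g t + f t) (Icc a b) :=
    monotoneOn_of_hasDerivWithinAt_nonneg (convex_Icc a b) (hg.add hf)
      (fun t ht => by
        rw [interior_Icc] at ht
        exact ((hg' t ht).add (hf' t ht)).hasDerivWithinAt)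
      (fun t ht => by
        rw [interior_Icc] at ht
        linarith [(abs_le.1 (hle t ht)).1])
  have h₁ := hsub (left_mem_Icc.2 hab) (right_mem_Icc.2 hab) hab
  have h₂ := hadd (left_mem_Icc.2 hab) (right_mem_Icc.2 hab) hab
  simp only at h₁ h₂
  exact abs_le.2 ⟨by linarith, by linarith⟩

lemma abs_sub_le_rpow_of_abs_deriv_le {F F' : ℝ → ℝ} {a α ρ : ℝ} (hα : 0 < α) (hρ : 0 ≤ ρ)
    (hF : ContinuousOn F (Icc 0 ρ)) (hF' : ∀ r ∈ Ioo 0 ρ, HasDerivAt F (F' r) r)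
    (hle : ∀ r ∈ Ioo 0 ρ, |F' r| ≤ a * r ^ (α - 1)) : |F ρ - F 0| ≤ a / α * ρ ^ α := by
  have h := abs_sub_le_sub_of_abs_deriv_le (g := fun r => a / α * r ^ α) hρ hF
    (continuousOn_const.mul (continuousOn_id.rpow_const fun _ _ => Or.inr hα.le)) hF'
    (fun r hr => ((Real.hasDerivAt_rpow_const (Or.inl hr.1.ne')).const_mul (a / α)).congr_deriv
      (show _ = a * r ^ (α - 1) by field_simp)) hle
  simpa only [Real.zero_rpow hα.ne', mul_zero, sub_zero] using h

lemma abs_le_rpow_of_abs_deriv_le_of_tendsto_zero {F F' : ℝ → ℝ} {b β ρ : ℝ} (hb : 0 ≤ b)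
    (hβ : 0 < β) (hρ : 0 < ρ) (hF : ContinuousOn F (Ici ρ))
    (hF' : ∀ r ∈ Ioi ρ, HasDerivAt F (F' r) r)
    (hle : ∀ r ∈ Ioi ρ, |F' r| ≤ b * r ^ (-β - 1)) (hlim : Filter.Tendsto F Filter.atTop (nhds 0)) :
    |F ρ| ≤ b / β * ρ ^ (-β) := by
  have hbound : ∀ R ∈ Ici ρ, |F ρ - F R| ≤ b / β * ρ ^ (-β) := by
    intro R (hR : ρ ≤ R)
    have hpos : ∀ r ∈ Icc ρ R, 0 < r := fun r hr => hρ.trans_le hr.1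
    have h := abs_sub_le_sub_of_abs_deriv_le (g := fun r => -(b / β) * r ^ (-β)) hR
      (hF.mono Icc_subset_Ici_self)
      (continuousOn_const.mul (continuousOn_id.rpow_const fun r hr => Or.inl (hpos r hr).ne'))
      (fun r hr => hF' r hr.1)
      (fun r hr => ((Real.hasDerivAt_rpow_const (Or.inl (hρ.trans hr.1).ne')).const_mul
        (-(b / β))).congr_deriv (show _ = b * r ^ (-β - 1) by field_simp))
      (fun r hr => hle r hr.1)
    have hRβ : 0 ≤ b / β * R ^ (-β) := by
      have := Real.rpow_nonneg (hρ.le.trans hR) (-β)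
      positivity
    rw [abs_sub_comm]
    linarith
  have hlim' : Filter.Tendsto (fun R => |F ρ - F R|) Filter.atTop (nhds |F ρ|) := by
    simpa only [sub_zero] using (tendsto_const_nhds.sub hlim).abs
  exact le_of_tendsto hlim' ((Filter.eventually_ge_atTop ρ).mono hbound)

lemma abs_sub_le_rpow_of_scale_deriv_le {F G F' G' : ℝ → ℝ} {a b α ρ : ℝ} (hα : α ∈ Ioo (0 : ℝ) 1)
    (hρ : 0 < ρ) (hb : 0 ≤ b) (hF : ContinuousOn F (Ici 0)) (hG : ContinuousOn G (Ici 0))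
    (hF' : ∀ r ∈ Ioi (0 : ℝ), HasDerivAt F (F' r) r)
    (hG' : ∀ r ∈ Ioi (0 : ℝ), HasDerivAt G (G' r) r)
    (hFle : ∀ r ∈ Ioi (0 : ℝ), |F' r| ≤ a * r ^ (α - 1))
    (hGle : ∀ r ∈ Ioi (0 : ℝ), |G' r| ≤ a * r ^ (α - 1))
    (hFGle : ∀ r ∈ Ioi ρ, |F' r - G' r| ≤ b * ρ * r ^ (α - 2))
    (hlim : Filter.Tendsto (fun r => F r - G r) Filter.atTop (nhds 0)) :
    |F 0 - G 0| ≤ (2 * (a / α) + b / (1 - α)) * ρ ^ α := by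
  have hnearF := abs_sub_le_rpow_of_abs_deriv_le hα.1 hρ.le (hF.mono Icc_subset_Ici_self)
    (fun r hr => hF' r hr.1) (fun r hr => hFle r hr.1)
  have hnearG := abs_sub_le_rpow_of_abs_deriv_le hα.1 hρ.le (hG.mono Icc_subset_Ici_self)
    (fun r hr => hG' r hr.1) (fun r hr => hGle r hr.1)
  have hfar : |F ρ - G ρ| ≤ b / (1 - α) * ρ ^ α := by
    have h := abs_le_rpow_of_abs_deriv_le_of_tendsto_zero (F := fun r => F r - G r)
      (mul_nonneg hb hρ.le) (sub_pos.2 hα.2) hρ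
      ((hF.sub hG).mono (Ici_subset_Ici.2 hρ.le))
      (fun r hr => (hF' r (hρ.trans hr)).sub (hG' r (hρ.trans hr)))
      (fun r hr => (hFGle r hr).trans_eq (by ring_nf)) hlim
    refine h.trans_eq ?_
    rw [neg_sub, Real.rpow_sub_one hρ.ne']
    field_simp
  calc |F 0 - G 0| = |(F ρ - G ρ) - (F ρ - F 0) + (G ρ - G 0)| := by ring_nf
    _ ≤ |F ρ - G ρ| + |F ρ - F 0| + |G ρ - G 0| :=
        (abs_add_le _ _).trans (by gcongr; exact abs_sub _ _)
    _ ≤ (2 * (a / α) + b / (1 - α)) * ρ ^ α := by linarith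

lemma abs_inv_mul_le_rpow {A c r β : ℝ} (hr : 0 < r) (hA : |A| ≤ c * r ^ β) :
    |r⁻¹ * A| ≤ c * r ^ (β - 1) := by
  rw [abs_mul, abs_of_pos (inv_pos.2 hr), Real.rpow_sub_one hr.ne', inv_mul_eq_div, ← mul_div_assoc]
  gcongr

lemma abs_exp_sub_exp_le {a b M : ℝ} (ha : a ≤ M) (hb : b ≤ M) :
    |Real.exp a - Real.exp b| ≤ Real.exp M * |a - b| :=
  Convex.norm_image_sub_le_of_norm_hasDerivWithin_le
    (fun t _ => (Real.hasDerivAt_exp t).hasDerivWithinAt)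
    (fun t ht => by
      rw [Real.norm_eq_abs, Real.abs_exp]
      exact Real.exp_le_exp.2 ht)
    (convex_Iic M) hb ha

lemma deriv_deriv_nonpos_of_isLocalMax {p : ℝ → ℝ} {t : ℝ} (hp : ContinuousAt p t)
    (hmax : IsLocalMax p t) : deriv (deriv p) t ≤ 0 := by
  by_contra! hpos
  have hmin : IsLocalMin p t := isLocalMin_of_deriv_deriv_pos hpos hmax.deriv_eq_zero hp
  have hconst : p =ᶠ[nhds t] fun _ => p t := by
    filter_upwards [hmax, hmin] with s hs hs' using le_antisymm hs hs'
  have hzero := hconst.deriv.deriv_eq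
  simp only [deriv_const', deriv_const] at hzero
  exact hpos.ne' hzero

end OneVariable

section DirectionalDerivative

variable {E : Type*} [NormedAddCommGroup E] [NormedSpace ℝ E]

/-- The derivative `∂_v f` of `f` in the direction `v`, as a function of the base point. It is
defined through `fderiv` (rather than `lineDeriv`) so that `grad`, `hess` and `lap` unfold to it. -/
noncomputable def dirDeriv (v : E) (f : E → ℝ) (x : E) : ℝ := fderiv ℝ f x v

variable {f : E → ℝ} {v w : E}

lemma contDiff_dirDeriv {m n : WithTop ℕ∞} (hf : ContDiff ℝ n f) (hmn : m + 1 ≤ n) :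
    ContDiff ℝ m (dirDeriv v f) :=
  (hf.fderiv_right hmn).clm_apply contDiff_const

lemma contDiff_one_dirDeriv (hf : ContDiff ℝ 2 f) : ContDiff ℝ 1 (dirDeriv v f) :=
  contDiff_dirDeriv hf one_add_one_eq_two.le

lemma continuous_dirDeriv (hf : ContDiff ℝ 1 f) : Continuous (dirDeriv v f) :=
  (contDiff_dirDeriv (m := 0) hf (zero_add 1).le).continuous

lemma continuous_dirDeriv_dirDeriv (hf : ContDiff ℝ 2 f) :
    Continuous (dirDeriv v (dirDeriv w f)) :=
  continuous_dirDeriv (contDiff_one_dirDeriv hf)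

lemma hasCompactSupport_dirDeriv (hf : HasCompactSupport f) : HasCompactSupport (dirDeriv v f) :=
  hf.fderiv_apply ℝ v

lemma dirDeriv_neg : dirDeriv v (-f) = -dirDeriv v f := by
  ext x
  simp only [dirDeriv, fderiv_neg, Pi.neg_apply, neg_apply]

lemma dirDeriv_comm (hf : ContDiff ℝ 2 f) :
    dirDeriv v (dirDeriv w f) = dirDeriv w (dirDeriv v f) := by
  have hdiff : Differentiable ℝ (fderiv ℝ f) :=
    (hf.fderiv_right one_add_one_eq_two.le).differentiable one_ne_zero
  have hsnd : ∀ (v w : E) x, dirDeriv v (dirDeriv w f) x = fderiv ℝ (fderiv ℝ f) x v w := by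
    intro v w x
    change fderiv ℝ (fun y => fderiv ℝ f y w) x v = _
    rw [fderiv_clm_apply (hdiff x) (differentiableAt_const w)]
    simp
  ext x
  rw [hsnd, hsnd]
  exact hf.contDiffAt.isSymmSndFDerivAt (by simp) v w

lemma hasDerivAt_comp_add_smul (hf : Differentiable ℝ f) (x v : E) (t : ℝ) :
    HasDerivAt (fun t : ℝ => f (x + t • v)) (dirDeriv v f (x + t • v)) t := by
  have hline : HasDerivAt (fun t : ℝ => x + t • v) v t := by
    simpa using ((hasDerivAt_id t).smul_const v).const_add x
  exact (hf _).hasFDerivAt.comp_hasDerivAt t hline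

lemma dirDeriv_dirDeriv_nonpos_of_forall_le (hf : ContDiff ℝ 2 f) {x₀ : E}
    (hmax : ∀ x, f x ≤ f x₀) : dirDeriv v (dirDeriv v f) x₀ ≤ 0 := by
  have hf₁ : Differentiable ℝ f := hf.differentiable two_ne_zero
  have hf₂ : Differentiable ℝ (dirDeriv v f) :=
    (contDiff_one_dirDeriv hf).differentiable one_ne_zero
  have hderiv : deriv (fun t : ℝ => f (x₀ + t • v)) = fun t => dirDeriv v f (x₀ + t • v) :=
    funext fun t => (hasDerivAt_comp_add_smul hf₁ x₀ v t).deriv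
  have h := deriv_deriv_nonpos_of_isLocalMax (p := fun t : ℝ => f (x₀ + t • v)) (t := 0)
    (hasDerivAt_comp_add_smul hf₁ x₀ v 0).continuousAt
    (Filter.Eventually.of_forall fun t => by simpa using hmax (x₀ + t • v))
  rwa [hderiv, (hasDerivAt_comp_add_smul hf₂ x₀ v 0).deriv, zero_smul, add_zero] at h

lemma abs_sub_le_of_abs_dirDeriv_le (hf : Differentiable ℝ f) {M : ℝ}
    (hM : ∀ x, |dirDeriv v f x| ≤ M) (x : E) {t : ℝ} (ht : 0 ≤ t) :
    |f (x + t • v) - f x| ≤ M * t := by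
  simpa using norm_image_sub_le_of_norm_deriv_le_segment'
    (fun s _ => (hasDerivAt_comp_add_smul hf x v s).hasDerivWithinAt)
    (fun s _ => hM (x + s • v)) t (right_mem_Icc.2 ht)

lemma abs_dirDeriv_le_of_abs_le (hf : ContDiff ℝ 2 f) {A H h : ℝ} (hh : 0 < h)
    (hA : ∀ x, |f x| ≤ A) (hH : ∀ x, |dirDeriv v (dirDeriv v f) x| ≤ H) (x : E) :
    |dirDeriv v f x| ≤ 2 * A / h + h * H := by
  have hf₁ : Differentiable ℝ f := hf.differentiable two_ne_zero
  have hf₂ : Differentiable ℝ (dirDeriv v f) :=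
    (contDiff_one_dirDeriv hf).differentiable one_ne_zero
  have hH₀ : 0 ≤ H := (abs_nonneg _).trans (hH x)
  obtain ⟨t, ht, hslope⟩ := exists_hasDerivAt_eq_slope (fun t : ℝ => f (x + t • v))
    (fun t => dirDeriv v f (x + t • v)) hh
    (fun t _ => (hasDerivAt_comp_add_smul hf₁ x v t).continuousAt.continuousWithinAt)
    (fun t _ => hasDerivAt_comp_add_smul hf₁ x v t)
  have hmid : |dirDeriv v f (x + t • v)| ≤ 2 * A / h := by
    rw [hslope, abs_div, sub_zero, abs_of_pos hh]
    gcongr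
    exact (abs_sub _ _).trans (by linarith [hA (x + h • v), hA (x + (0 : ℝ) • v)])
  have hdrift : |dirDeriv v f (x + t • v) - dirDeriv v f x| ≤ h * H :=
    (abs_sub_le_of_abs_dirDeriv_le hf₂ hH x ht.1.le).trans (by nlinarith [ht.2])
  calc |dirDeriv v f x|
      = |dirDeriv v f (x + t • v) - (dirDeriv v f (x + t • v) - dirDeriv v f x)| := by ring_nf
    _ ≤ 2 * A / h + h * H := (abs_sub _ _).trans (add_le_add hmid hdrift)

end DirectionalDerivative

section KernelAverage

lemma support_sub_translate_subset {G : Type*} [SeminormedAddCommGroup G] {K : G → ℝ} {a b : ℝ}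
    (hK : Function.support K ⊆ Metric.closedBall 0 a) {w : G} (hw : ‖w‖ ≤ b) :
    Function.support (fun z => K z - K (z - w)) ⊆ Metric.closedBall 0 (a + b) := by
  intro z hz
  rw [mem_closedBall_zero_iff]
  rcases eq_or_ne (K z) 0 with hKz | hKz
  · have hKzw : K (z - w) ≠ 0 := fun h => hz (by simp only [hKz, h, sub_zero])
    linarith [mem_closedBall_zero_iff.1 (hK hKzw), norm_sub_norm_le z w]
  · linarith [mem_closedBall_zero_iff.1 (hK hKz), norm_nonneg w]

variable {E : Type*} [NormedAddCommGroup E] [NormedSpace ℝ E] [MeasureSpace E]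

/-- The average `∫ K(y) f(x - r y) dy` of `f` about `x` at scale `r` against the kernel `K`. Unlike
in a convolution with `r⁻ᵈ K(·/r)`, the scale acts on the argument of `f`, so that `r = 0` is
allowed and the kernel need not be normalised. -/
noncomputable def kernelAvg (K f : E → ℝ) (x : E) (r : ℝ) : ℝ := ∫ y, K y * f (x - r • y)

variable {K f : E → ℝ}

lemma kernelAvg_zero (K f : E → ℝ) (x : E) : kernelAvg K f x 0 = (∫ y, K y) * f x := by
  rw [kernelAvg, ← integral_mul_const]
  simp only [zero_smul, sub_zero]

lemma abs_kernelAvg_le (hK : Integrable K) {x : E} {r M : ℝ}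
    (hM : ∀ y ∈ Function.support K, |f (x - r • y)| ≤ M) :
    |kernelAvg K f x r| ≤ (∫ y, |K y|) * M := by
  rw [kernelAvg, ← Real.norm_eq_abs, ← integral_mul_const]
  refine norm_integral_le_of_norm_le (hK.abs.mul_const M) (.of_forall fun y => ?_)
  rw [norm_mul, Real.norm_eq_abs, Real.norm_eq_abs]
  rcases eq_or_ne (K y) 0 with hy | hy
  · simp only [hy, abs_zero, zero_mul, le_refl]
  · exact mul_le_mul_of_nonneg_left (hM y hy) (abs_nonneg _)

variable [BorelSpace E]

section FiniteOnCompacts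

variable [IsFiniteMeasureOnCompacts (volume : Measure E)]

lemma integrable_kernel_mul (hK : Continuous K) (hKs : HasCompactSupport K) (hf : Continuous f)
    (x : E) (r : ℝ) : Integrable (fun y => K y * f (x - r • y)) :=
  (by fun_prop : Continuous _).integrable_of_hasCompactSupport hKs.mul_right

lemma abs_kernelAvg_le_of_holder (hK : Continuous K) (hKs : HasCompactSupport K)
    (hf : Continuous f) {a α B r : ℝ} (hmean : ∫ y, K y = 0)
    (hsupp : Function.support K ⊆ Metric.closedBall 0 a) (hα : 0 ≤ α) (hB : 0 ≤ B)
    (hhol : ∀ x y, |f x - f y| ≤ B * ‖x - y‖ ^ α) (x : E) (hr : 0 ≤ r) :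
    |kernelAvg K f x r| ≤ (∫ y, |K y|) * (B * (r * a) ^ α) := by
  have hint : Integrable K := hK.integrable_of_hasCompactSupport hKs
  have hcentre : kernelAvg K f x r = kernelAvg K (fun z => f z - f x) x r := by
    simp only [kernelAvg, mul_sub]
    rw [integral_sub (integrable_kernel_mul hK hKs hf x r) (hint.mul_const _), integral_mul_const,
      hmean, zero_mul, sub_zero]
  rw [hcentre]
  refine abs_kernelAvg_le hint fun y hy => (hhol _ _).trans ?_
  rw [sub_sub_cancel_left, norm_neg, norm_smul, Real.norm_of_nonneg hr]
  have hy' : ‖y‖ ≤ a := mem_closedBall_zero_iff.1 (hsupp hy)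
  gcongr

lemma exists_abs_kernelAvg_le_of_holder (hK : Continuous K) (hKs : HasCompactSupport K)
    (hmean : ∫ y, K y = 0) {α : ℝ} (hα : 0 ≤ α) :
    ∃ C, 0 ≤ C ∧ ∀ (f : E → ℝ) (B : ℝ), Continuous f → 0 ≤ B →
      (∀ x y, |f x - f y| ≤ B * ‖x - y‖ ^ α) →
      ∀ x r, 0 ≤ r → |kernelAvg K f x r| ≤ C * B * r ^ α := by
  obtain ⟨a, ha₀, ha⟩ := hKs.isBounded.subset_closedBall_lt 0 0
  refine ⟨(∫ y, |K y|) * a ^ α, by positivity, fun f B hf hB hhol x r hr => ?_⟩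
  refine (abs_kernelAvg_le_of_holder hK hKs hf hmean ((subset_tsupport K).trans ha) hα hB hhol x
    hr).trans_eq ?_
  rw [Real.mul_rpow hr ha₀.le]
  ring

lemma continuous_kernelAvg (hK : Continuous K) (hKs : HasCompactSupport K) (hf : Continuous f)
    (x : E) : Continuous (kernelAvg K f x) := by
  have hset : kernelAvg K f x = fun r => ∫ y in tsupport K, K y * f (x - r • y) := by
    ext r
    refine (setIntegral_eq_integral_of_forall_compl_eq_zero fun y hy => ?_).symm
    rw [image_eq_zero_of_notMem_tsupport hy, zero_mul]
  rw [hset]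
  have : IsFiniteMeasure (volume.restrict (tsupport K) : Measure E) :=
    isFiniteMeasure_restrict.2 hKs.measure_lt_top.ne
  rw [continuous_iff_continuousAt]
  intro r
  obtain ⟨N, hN⟩ := ((isCompact_closedBall r 1).prod hKs).exists_bound_of_continuousOn
    (f := fun p : ℝ × E => K p.2 * f (x - p.1 • p.2)) (by fun_prop)
  refine continuousAt_of_dominated (bound := fun _ => N)
    (.of_forall fun s => (by fun_prop : Continuous _).aestronglyMeasurable) ?_
    (integrable_const N) (.of_forall fun y => by fun_prop)
  filter_upwards [Metric.closedBall_mem_nhds r one_pos] with s hs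
  filter_upwards [ae_restrict_mem (isClosed_tsupport K).measurableSet] with y hy
  exact hN (s, y) ⟨hs, hy⟩

lemma hasDerivAt_kernelAvg (hK : Continuous K) (hKs : HasCompactSupport K) (hf : ContDiff ℝ 1 f)
    (x : E) (r : ℝ) :
    HasDerivAt (kernelAvg K f x) (-∫ y, K y * fderiv ℝ f (x - r • y) y) r := by
  have hfd : Differentiable ℝ f := hf.differentiable one_ne_zero
  have : Continuous (fderiv ℝ f) := hf.continuous_fderiv one_ne_zero
  obtain ⟨N, hN⟩ := ((isCompact_closedBall r 1).prod hKs).exists_bound_of_continuousOn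
    (f := fun p : ℝ × E => -(K p.2 * fderiv ℝ f (x - p.1 • p.2) p.2)) (by fun_prop)
  have hscale : ∀ y s, HasDerivAt (fun s : ℝ => K y * f (x - s • y))
      (-(K y * fderiv ℝ f (x - s • y) y)) s := by
    intro y s
    have hline : HasDerivAt (fun s : ℝ => x - s • y) (-y) s := by
      simpa using ((hasDerivAt_id s).smul_const y).const_sub x
    simpa using ((hfd _).hasFDerivAt.comp_hasDerivAt s hline).const_mul (K y)
  rw [← integral_neg]
  refine (hasDerivAt_integral_of_dominated_loc_of_deriv_le
    (bound := (tsupport K).indicator fun _ => N) (Metric.closedBall_mem_nhds r one_pos)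
    (.of_forall fun s => (integrable_kernel_mul hK hKs hf.continuous x s).aestronglyMeasurable)
    (integrable_kernel_mul hK hKs hf.continuous x r)
    (by fun_prop : Continuous _).aestronglyMeasurable
    (.of_forall fun y s hs => ?_)
    ((integrable_indicator_iff (isClosed_tsupport K).measurableSet).2
      (integrableOn_const hKs.measure_lt_top.ne))
    (.of_forall fun y s _ => hscale y s)).2
  by_cases hy : y ∈ tsupport K
  · rw [indicator_of_mem hy]
    exact hN (s, y) ⟨hs, hy⟩
  · rw [indicator_of_notMem hy, image_eq_zero_of_notMem_tsupport hy, zero_mul, neg_zero, norm_zero]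

lemma exists_integral_abs_sub_translate_le [ProperSpace E] (hK : ContDiff ℝ 1 K)
    (hKs : HasCompactSupport K) :
    ∃ C, 0 ≤ C ∧ ∀ w : E, ‖w‖ ≤ 1 → ∫ y, |K y - K (y - w)| ≤ C * ‖w‖ := by
  obtain ⟨L, hL⟩ := hK.lipschitzWith_of_hasCompactSupport hKs one_ne_zero
  obtain ⟨a, ha⟩ := hKs.isBounded.subset_closedBall 0
  let S : Set E := Metric.closedBall 0 (a + 1)
  have hSm : MeasurableSet S := Metric.isClosed_closedBall.measurableSet
  refine ⟨volume.real S * L, by positivity, fun w hw => ?_⟩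
  have hbound : ∀ y, |K y - K (y - w)| ≤ S.indicator (fun _ => L * ‖w‖) y := by
    intro y
    by_cases hy : y ∈ S
    · rw [indicator_of_mem hy]
      simpa [dist_eq_norm] using hL.dist_le_mul y (y - w)
    · have hyK := fun h => hy (support_sub_translate_subset ((subset_tsupport K).trans ha) hw h)
      rw [indicator_of_notMem hy, Function.notMem_support.1 hyK, abs_zero]
  calc ∫ y, |K y - K (y - w)| ≤ ∫ y, S.indicator (fun _ => L * ‖w‖) y :=
        integral_mono_of_nonneg (.of_forall fun y => abs_nonneg _)
          ((integrable_indicator_iff hSm).2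
            (integrableOn_const (isCompact_closedBall _ _).measure_lt_top.ne))
          (.of_forall hbound)
    _ = volume.real S * L * ‖w‖ := by
        rw [integral_indicator_const _ hSm, smul_eq_mul, mul_assoc]

end FiniteOnCompacts

section HaarMeasure

variable [(volume : Measure E).IsAddHaarMeasure]

lemma kernelAvg_sub_kernelAvg (hK : Continuous K) (hKs : HasCompactSupport K) (hf : Continuous f)
    (x y : E) {r : ℝ} (hr : r ≠ 0) :
    kernelAvg K f x r - kernelAvg K f y r =
      kernelAvg (fun z => K z - K (z - r⁻¹ • (x - y))) f x r := by
  set w : E := r⁻¹ • (x - y) with hw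
  have htranslate : kernelAvg K f y r = ∫ z, K (z - w) * f (x - r • z) := by
    rw [kernelAvg, ← integral_sub_right_eq_self _ w]
    congr with z
    rw [smul_sub, hw, smul_inv_smul₀ hr]
    congr 2
    abel
  have hKw : Integrable fun z => K (z - w) * f (x - r • z) :=
    integrable_kernel_mul (K := fun z => K (z - w)) (by fun_prop)
      (hKs.comp_homeomorph (Homeomorph.subRight w)) hf x r
  rw [htranslate, kernelAvg, kernelAvg, ← integral_sub (integrable_kernel_mul hK hKs hf x r) hKw]
  simp only [sub_mul]

section ProperSpace

variable [ProperSpace E]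

lemma exists_abs_kernelAvg_sub_le_of_holder (hK : ContDiff ℝ 1 K) (hKs : HasCompactSupport K)
    {α : ℝ} (hα : 0 ≤ α) :
    ∃ C, 0 ≤ C ∧ ∀ (f : E → ℝ) (B : ℝ), Continuous f → 0 ≤ B →
      (∀ x y, |f x - f y| ≤ B * ‖x - y‖ ^ α) →
      ∀ x y r, 0 < r → ‖x - y‖ ≤ r →
        |kernelAvg K f x r - kernelAvg K f y r| ≤ C * B * ‖x - y‖ * r ^ (α - 1) := by
  obtain ⟨L, hL₀, hL⟩ := exists_integral_abs_sub_translate_le hK hKs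
  obtain ⟨a, ha₀, ha⟩ := hKs.isBounded.subset_closedBall_lt 0 0
  refine ⟨L * (a + 1) ^ α, by positivity, fun f B hf hB hhol x y r hr hxy => ?_⟩
  set w : E := r⁻¹ • (x - y)
  have hwr : ‖w‖ = ‖x - y‖ / r := by
    rw [norm_smul, norm_inv, Real.norm_of_nonneg hr.le, inv_mul_eq_div]
  have hw : ‖w‖ ≤ 1 := hwr.trans_le ((div_le_one hr).2 hxy)
  have hKint : Integrable K := hK.continuous.integrable_of_hasCompactSupport hKs
  have hmean : ∫ z, (K z - K (z - w)) = 0 := by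
    rw [integral_sub hKint (hKint.comp_sub_right w), integral_sub_right_eq_self, sub_self]
  rw [kernelAvg_sub_kernelAvg hK.continuous hKs hf x y hr.ne']
  calc |kernelAvg (fun z => K z - K (z - w)) f x r|
      ≤ (∫ z, |K z - K (z - w)|) * (B * (r * (a + 1)) ^ α) :=
        abs_kernelAvg_le_of_holder (hK.continuous.sub (hK.continuous.comp (by fun_prop)))
          (hKs.sub (hKs.comp_homeomorph (Homeomorph.subRight w))) hf hmean
          (support_sub_translate_subset ((subset_tsupport K).trans ha) hw) hα hB hhol x hr.le
    _ ≤ L * ‖w‖ * (B * (r * (a + 1)) ^ α) := by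
        gcongr
        exact hL w hw
    _ = L * (a + 1) ^ α * B * ‖x - y‖ * r ^ (α - 1) := by
        rw [hwr, Real.mul_rpow hr.le (by positivity), Real.rpow_sub_one hr.ne']
        ring

lemma tendsto_kernelAvg_sub_atTop (hK : ContDiff ℝ 1 K) (hKs : HasCompactSupport K)
    (hf : Continuous f) {N : ℝ} (hN : ∀ x, |f x| ≤ N) (x y : E) :
    Filter.Tendsto (fun r => kernelAvg K f x r - kernelAvg K f y r) Filter.atTop (nhds 0) := by
  obtain ⟨L, -, hL⟩ := exists_integral_abs_sub_translate_le hK hKs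
  have hN₀ : 0 ≤ N := (abs_nonneg _).trans (hN x)
  refine squeeze_zero_norm' ?_ (tendsto_const_nhds.div_atTop Filter.tendsto_id :
    Filter.Tendsto (fun r => L * ‖x - y‖ * N / r) Filter.atTop (nhds 0))
  filter_upwards [Filter.eventually_ge_atTop ‖x - y‖, Filter.eventually_gt_atTop 0] with r hxy hr
  set w : E := r⁻¹ • (x - y)
  have hwr : ‖w‖ = ‖x - y‖ / r := by
    rw [norm_smul, norm_inv, Real.norm_of_nonneg hr.le, inv_mul_eq_div]
  have hKint : Integrable K := hK.continuous.integrable_of_hasCompactSupport hKs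
  rw [kernelAvg_sub_kernelAvg hK.continuous hKs hf x y hr.ne', Real.norm_eq_abs]
  calc |kernelAvg (fun z => K z - K (z - w)) f x r|
      ≤ (∫ z, |K z - K (z - w)|) * N :=
        abs_kernelAvg_le (hKint.sub (hKint.comp_sub_right w)) fun z _ => hN _
    _ ≤ L * ‖w‖ * N := by
        gcongr
        exact hL w (hwr.trans_le ((div_le_one hr).2 hxy))
    _ = L * ‖x - y‖ * N / r := by rw [hwr]; ring

end ProperSpace

variable [FiniteDimensional ℝ E] {v w : E}

lemma kernelAvg_dirDeriv_kernel (hK : ContDiff ℝ 1 K) (hKs : HasCompactSupport K)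
    (hf : ContDiff ℝ 1 f) (x : E) (r : ℝ) :
    kernelAvg (dirDeriv v K) f x r = r * kernelAvg K (dirDeriv v f) x r := by
  have hfd : Differentiable ℝ f := hf.differentiable one_ne_zero
  have hchain : ∀ y, fderiv ℝ (fun y => f (x - r • y)) y v = -r * dirDeriv v f (x - r • y) := by
    intro y
    have hinner : HasFDerivAt (fun y : E => x - r • y) (-(r • ContinuousLinearMap.id ℝ E)) y := by
      simpa using ((hasFDerivAt_id (𝕜 := ℝ) y).const_smul r).const_sub x
    have h := ((hfd (x - r • y)).hasFDerivAt.comp y hinner).fderiv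
    rw [Function.comp_def] at h
    simp [h, dirDeriv]
  have h := integral_mul_fderiv_eq_neg_fderiv_mul_of_integrable (μ := (volume : Measure E))
    (f := K) (g := fun y => f (x - r • y)) (v := v)
    (integrable_kernel_mul (continuous_dirDeriv hK) (hasCompactSupport_dirDeriv hKs)
      hf.continuous x r)
    (by
      simp only [hchain, mul_left_comm _ (-r)]
      exact (integrable_kernel_mul hK.continuous hKs (continuous_dirDeriv hf) x r).const_mul (-r))
    (integrable_kernel_mul hK.continuous hKs hf.continuous x r)
    (fun y _ => hK.differentiable one_ne_zero y)
    (fun y _ => (hfd.comp (by fun_prop : Differentiable ℝ fun y : E => x - r • y)) y)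
  simp only [hchain, mul_left_comm _ (-r), integral_const_mul] at h
  rw [kernelAvg, kernelAvg]
  simp only [dirDeriv] at h ⊢
  linarith

lemma integral_dirDeriv_eq_zero (hK : ContDiff ℝ 1 K) (hKs : HasCompactSupport K) :
    ∫ y, dirDeriv v K y = 0 := by
  simpa [kernelAvg_zero] using kernelAvg_dirDeriv_kernel (v := v) (f := fun _ => 1) hK hKs
    contDiff_const 0 0

lemma kernelAvg_dirDeriv_swap (hK : ContDiff ℝ 2 K) (hKs : HasCompactSupport K)
    (hf : ContDiff ℝ 1 f) (x : E) {r : ℝ} (hr : r ≠ 0) :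
    kernelAvg (dirDeriv v K) (dirDeriv w f) x r = kernelAvg (dirDeriv w K) (dirDeriv v f) x r := by
  refine mul_left_cancel₀ hr ?_
  rw [← kernelAvg_dirDeriv_kernel (contDiff_one_dirDeriv hK) (hasCompactSupport_dirDeriv hKs) hf,
    ← kernelAvg_dirDeriv_kernel (contDiff_one_dirDeriv hK) (hasCompactSupport_dirDeriv hKs) hf,
    dirDeriv_comm hK]

end HaarMeasure

end KernelAverage

/-- The partial derivative `∂ᵢ` of a function on `ℝ^d`. -/
local notation:max "∂[" i "]" => dirDeriv (Pi.single i (1 : ℝ) : Fin _ → ℝ)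

section Schauder

variable {d : ℕ} {u ψ φ : (Fin d → ℝ) → ℝ}

lemma fderiv_eq_sum_dirDeriv (x v : Fin d → ℝ) : fderiv ℝ u x v = ∑ k, v k * ∂[k] u x := by
  conv_lhs => rw [pi_eq_sum_univ' v]
  simp only [map_sum, map_smul, smul_eq_mul, dirDeriv]

lemma continuous_lap (hu : ContDiff ℝ 2 u) : Continuous (lap u) :=
  continuous_finsetSum _ fun _ _ => continuous_dirDeriv_dirDeriv hu

lemma dirDeriv_coord_mul (hφ : Differentiable ℝ φ) (i k : Fin d) (y : Fin d → ℝ) :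
    ∂[i] (fun y => y k * φ y) y = y k * ∂[i] φ y + if k = i then φ y else 0 := by
  have h := ((hasFDerivAt_apply (𝕜 := ℝ) k y).fun_mul (hφ y).hasFDerivAt).fderiv
  simp only [dirDeriv, h]
  rcases eq_or_ne k i with rfl | hk
  · simp
  · simp [hk]

section RadialKernel

lemma dirDeriv_sum_sq (k : Fin d) (y : Fin d → ℝ) : ∂[k] (fun y => ∑ l, y l ^ 2) y = 2 * y k := by
  have h := (HasFDerivAt.fun_sum fun l (_ : l ∈ Finset.univ) =>
    (hasFDerivAt_apply (𝕜 := ℝ) l y).pow 2).fderiv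
  simp [dirDeriv, h, Pi.single_apply]

lemma dirDeriv_comp_sum_sq {F : ℝ → ℝ} (hF : Differentiable ℝ F) (k : Fin d) (y : Fin d → ℝ) :
    ∂[k] (fun y => F (∑ l, y l ^ 2)) y = y k * (2 * deriv F (∑ l, y l ^ 2)) := by
  have hQ : Differentiable ℝ fun y : Fin d → ℝ => ∑ l, y l ^ 2 := by fun_prop
  have h := ((hF _).hasDerivAt.comp_hasFDerivAt y (hQ y).hasFDerivAt).fderiv
  have hk := dirDeriv_sum_sq k y
  simp only [dirDeriv, Function.comp_def] at h hk ⊢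
  rw [h, smul_apply, hk, smul_eq_mul]
  ring

lemma hasCompactSupport_comp_sum_sq {g : ℝ → ℝ} {R : ℝ} (hg : ∀ ρ, R < ρ → g ρ = 0) :
    HasCompactSupport fun y : Fin d → ℝ => g (∑ l, y l ^ 2) := by
  refine HasCompactSupport.intro (isCompact_closedBall 0 (√R)) fun y hy => hg _ ?_
  contrapose! hy
  rw [mem_closedBall_zero_iff, pi_norm_le_iff_of_nonneg (Real.sqrt_nonneg R)]
  exact fun k => Real.abs_le_sqrt
    ((Finset.single_le_sum (f := fun l => y l ^ 2) (fun _ _ => sq_nonneg _)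
      (Finset.mem_univ k)).trans hy)

lemma deriv_eq_zero_of_forall_gt {F : ℝ → ℝ} {R : ℝ} (hR : ∀ ρ, R < ρ → F ρ = 0) {ρ : ℝ}
    (hρ : R < ρ) : deriv F ρ = 0 := by
  have h : F =ᶠ[nhds ρ] fun _ => 0 := Filter.eventually_of_mem (Ioi_mem_nhds hρ) hR
  rw [h.deriv_eq, deriv_const]

lemma integral_deriv_comp_sum_sq_neg {F : ℝ → ℝ} {R : ℝ} (hF : ContDiff ℝ 1 F)
    (hanti : Antitone F) (hR₀ : 0 < R) (hR : ∀ ρ, R < ρ → F ρ = 0) (hF₀ : F R < F 0) (i : Fin d) :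
    ∫ y : Fin d → ℝ, deriv F (∑ l, y l ^ 2) < 0 := by
  obtain ⟨ρ, hρ, hslope⟩ := exists_deriv_eq_slope F hR₀ hF.continuous.continuousOn
    (hF.differentiable one_ne_zero).differentiableOn
  have hderiv : deriv F ρ < 0 := by
    rw [hslope]
    exact div_neg_of_neg_of_pos (sub_neg.2 hF₀) (sub_pos.2 hR₀)
  have hpoint : ∑ l, (Pi.single i (√ρ) : Fin d → ℝ) l ^ 2 = ρ := by
    simp [Pi.single_apply, ite_pow, Real.sq_sqrt hρ.1.le]
  have hsupp : HasCompactSupport fun y : Fin d → ℝ => -deriv F (∑ l, y l ^ 2) :=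
    (hasCompactSupport_comp_sum_sq fun _ => deriv_eq_zero_of_forall_gt hR).neg
  have hcont : Continuous fun y : Fin d → ℝ => -deriv F (∑ l, y l ^ 2) :=
    (hF.continuous_deriv_one.comp (by fun_prop)).neg
  have h : 0 < ∫ y : Fin d → ℝ, -deriv F (∑ l, y l ^ 2) :=
    hcont.integral_pos_of_hasCompactSupport_nonneg_nonzero (x := Pi.single i (√ρ)) hsupp
      (fun y => neg_nonneg.2 hanti.deriv_nonpos) (by rw [hpoint]; exact neg_ne_zero.2 hderiv.ne)
  rwa [integral_neg, neg_pos] at h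

/-- A compactly supported kernel `φ` of mass one on `ℝ^d` together with a potential `ψ` satisfying
`∇ψ(y) = y φ(y)`, as every radial kernel has. -/
structure IsRadialKernel (ψ φ : (Fin d → ℝ) → ℝ) : Prop where
  contDiff_potential : ContDiff ℝ 3 ψ
  contDiff : ContDiff ℝ 1 φ
  hasCompactSupport_potential : HasCompactSupport ψ
  hasCompactSupport : HasCompactSupport φ
  dirDeriv_potential : ∀ k y, ∂[k] ψ y = y k * φ y
  integral_eq_one : ∫ y, φ y = 1

lemma exists_isRadialKernel (i : Fin d) : ∃ ψ φ : (Fin d → ℝ) → ℝ, IsRadialKernel ψ φ := by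
  let F : ℝ → ℝ := fun ρ => Real.smoothTransition (1 - ρ)
  have hF : ContDiff ℝ 3 F :=
    (Real.smoothTransition.contDiff (n := 3)).comp (contDiff_const.sub contDiff_id)
  have hF' : ContDiff ℝ 1 (deriv F) := ContDiff.deriv' (hF.of_le (by norm_num))
  have hvanish : ∀ ρ, 1 < ρ → F ρ = 0 := fun ρ hρ =>
    Real.smoothTransition.zero_of_nonpos (by linarith)
  have hmass : ∫ y : Fin d → ℝ, deriv F (∑ l, y l ^ 2) < 0 :=
    integral_deriv_comp_sum_sq_neg (hF.of_le (by norm_num))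
      (fun a b hab => Real.smoothTransition.monotone (by linarith)) one_pos hvanish
      (by simp [F]) i
  set c := ∫ y : Fin d → ℝ, deriv F (∑ l, y l ^ 2)
  refine ⟨fun y => (2 * c)⁻¹ * F (∑ l, y l ^ 2), fun y => c⁻¹ * deriv F (∑ l, y l ^ 2), ?_⟩
  refine ⟨contDiff_const.mul (hF.comp (by fun_prop)), contDiff_const.mul (hF'.comp (by fun_prop)),
    (hasCompactSupport_comp_sum_sq hvanish).mul_left,
    (hasCompactSupport_comp_sum_sq fun _ => deriv_eq_zero_of_forall_gt hvanish).mul_left,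
    fun k y => ?_, ?_⟩
  · have hG : Differentiable ℝ fun ρ => (2 * c)⁻¹ * F ρ :=
      (hF.differentiable (by norm_num)).const_mul _
    rw [dirDeriv_comp_sum_sq hG, deriv_const_mul _ (hF.differentiable (by norm_num) _)]
    field_simp
  · rw [integral_const_mul, inv_mul_cancel₀ hmass.ne]

lemma IsRadialKernel.coord_mul_dirDeriv (h : IsRadialKernel ψ φ) (i k : Fin d) (y : Fin d → ℝ) :
    y k * ∂[i] φ y = ∂[k] (∂[i] ψ) y - if k = i then φ y else 0 := by
  rw [dirDeriv_comm (h.contDiff_potential.of_le (by norm_num)),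
    funext (h.dirDeriv_potential k), dirDeriv_coord_mul (h.contDiff.differentiable one_ne_zero),
    add_sub_cancel_right]

end RadialKernel

lemma sum_kernelAvg_dirDeriv_dirDeriv {K : (Fin d → ℝ) → ℝ} (hK : ContDiff ℝ 2 K)
    (hKs : HasCompactSupport K) (hu : ContDiff ℝ 2 u) (j : Fin d) (x : Fin d → ℝ) {r : ℝ}
    (hr : r ≠ 0) :
    ∑ k, kernelAvg (∂[k] K) (∂[k] (∂[j] u)) x r = kernelAvg (∂[j] K) (lap u) x r := by
  have hswap : ∀ k, kernelAvg (∂[k] K) (∂[k] (∂[j] u)) x r =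
      kernelAvg (∂[j] K) (∂[k] (∂[k] u)) x r := by
    intro k
    rw [dirDeriv_comm hu, kernelAvg_dirDeriv_swap hK hKs (contDiff_one_dirDeriv hu) x hr]
  rw [Finset.sum_congr rfl fun k _ => hswap k]
  simp only [kernelAvg]
  rw [← integral_finsetSum _ fun k _ => integrable_kernel_mul
    (continuous_dirDeriv (hK.of_le one_le_two)) (hasCompactSupport_dirDeriv hKs)
    (continuous_dirDeriv_dirDeriv hu) x r]
  simp only [← Finset.mul_sum]
  rfl

lemma IsRadialKernel.integral_dirDeriv_mul_fderiv (h : IsRadialKernel ψ φ) (hu : ContDiff ℝ 2 u)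
    (i j : Fin d) (x : Fin d → ℝ) {r : ℝ} (hr : r ≠ 0) :
    ∫ y, ∂[i] φ y * fderiv ℝ (∂[j] u) (x - r • y) y =
      kernelAvg (∂[j] (∂[i] ψ)) (lap u) x r - kernelAvg φ (∂[i] (∂[j] u)) x r := by
  have hψ : ContDiff ℝ 2 (∂[i] ψ) := contDiff_dirDeriv h.contDiff_potential (by norm_num)
  have hψs := hasCompactSupport_dirDeriv (v := Pi.single i 1) h.hasCompactSupport_potential
  have hpoint : ∀ y, ∂[i] φ y * fderiv ℝ (∂[j] u) (x - r • y) y =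
      (∑ k, ∂[k] (∂[i] ψ) y * ∂[k] (∂[j] u) (x - r • y)) - φ y * ∂[i] (∂[j] u) (x - r • y) := by
    intro y
    rw [fderiv_eq_sum_dirDeriv, Finset.mul_sum]
    simp only [mul_left_comm (∂[i] φ y), ← mul_assoc, h.coord_mul_dirDeriv, sub_mul, ite_mul,
      zero_mul, Finset.sum_sub_distrib, Finset.sum_ite_eq', Finset.mem_univ, if_true]
  have hint : ∀ k, Integrable fun y => ∂[k] (∂[i] ψ) y * ∂[k] (∂[j] u) (x - r • y) := fun k =>
    integrable_kernel_mul (continuous_dirDeriv (hψ.of_le one_le_two))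
      (hasCompactSupport_dirDeriv hψs) (continuous_dirDeriv_dirDeriv hu) x r
  simp only [hpoint]
  rw [integral_sub (integrable_finsetSum _ fun k _ => hint k)
    (integrable_kernel_mul h.contDiff.continuous h.hasCompactSupport
      (continuous_dirDeriv_dirDeriv hu) x r), integral_finsetSum _ fun k _ => hint k]
  exact congrArg (· - _) (sum_kernelAvg_dirDeriv_dirDeriv hψ hψs hu j x hr)

lemma IsRadialKernel.hasDerivAt_kernelAvg_dirDeriv_dirDeriv (h : IsRadialKernel ψ φ)
    (hu : ContDiff ℝ 2 u) (i j : Fin d) (x : Fin d → ℝ) {r : ℝ} (hr : r ≠ 0) :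
    HasDerivAt (kernelAvg φ (∂[i] (∂[j] u)) x)
      (-(r⁻¹ * kernelAvg (∂[j] (∂[i] ψ)) (lap u) x r)) r := by
  have hibp : ∀ s, kernelAvg (∂[i] φ) (∂[j] u) x s = s * kernelAvg φ (∂[i] (∂[j] u)) x s :=
    kernelAvg_dirDeriv_kernel h.contDiff h.hasCompactSupport (contDiff_one_dirDeriv hu) x
  have hev : kernelAvg φ (∂[i] (∂[j] u)) x =ᶠ[nhds r]
      fun s => s⁻¹ * kernelAvg (∂[i] φ) (∂[j] u) x s := by
    filter_upwards [isOpen_ne.mem_nhds hr] with s hs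
    rw [hibp, inv_mul_cancel_left₀ hs]
  have hderiv := hasDerivAt_kernelAvg (continuous_dirDeriv (v := Pi.single i 1) h.contDiff)
    (hasCompactSupport_dirDeriv h.hasCompactSupport)
    (contDiff_one_dirDeriv (v := Pi.single j 1) hu) x r
  refine (((hasDerivAt_inv hr).mul hderiv).congr_of_eventuallyEq hev).congr_deriv ?_
  rw [h.integral_dirDeriv_mul_fderiv hu i j x hr, hibp]
  field_simp
  ring

lemma IsRadialKernel.exists_holder_dirDeriv_dirDeriv (h : IsRadialKernel ψ φ) {α : ℝ}
    (hα : α ∈ Ioo (0 : ℝ) 1) (i j : Fin d) :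
    ∃ C, ∀ (u : (Fin d → ℝ) → ℝ) (N B : ℝ), ContDiff ℝ 2 u → 0 ≤ B →
      (∀ x, |∂[i] (∂[j] u) x| ≤ N) → (∀ x y, |lap u x - lap u y| ≤ B * ‖x - y‖ ^ α) →
      ∀ x y, |∂[i] (∂[j] u) x - ∂[i] (∂[j] u) y| ≤ C * B * ‖x - y‖ ^ α := by
  have hψ : ContDiff ℝ 2 (∂[i] ψ) := contDiff_dirDeriv h.contDiff_potential (by norm_num)
  have hψs := hasCompactSupport_dirDeriv (v := Pi.single i 1) h.hasCompactSupport_potential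
  have hK : ContDiff ℝ 1 (∂[j] (∂[i] ψ)) := contDiff_one_dirDeriv hψ
  have hKs := hasCompactSupport_dirDeriv (v := Pi.single j 1) hψs
  obtain ⟨a, -, hnear⟩ := exists_abs_kernelAvg_le_of_holder hK.continuous hKs
    (integral_dirDeriv_eq_zero (hψ.of_le one_le_two) hψs) hα.1.le
  obtain ⟨b, hb, hfar⟩ := exists_abs_kernelAvg_sub_le_of_holder hK hKs hα.1.le
  refine ⟨2 * (a / α) + b / (1 - α), fun u N B hu hB hN hlap x y => ?_⟩
  have hlapc := continuous_lap hu
  have hDc : Continuous (∂[i] (∂[j] u)) := continuous_dirDeriv_dirDeriv hu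
  rcases eq_or_ne x y with rfl | hxy
  · simp [Real.zero_rpow hα.1.ne']
  have hVc : ∀ z, ContinuousOn (kernelAvg φ (∂[i] (∂[j] u)) z) (Ici 0) := fun z =>
    (continuous_kernelAvg h.contDiff.continuous h.hasCompactSupport hDc z).continuousOn
  have hV' : ∀ z, ∀ r ∈ Ioi (0 : ℝ), HasDerivAt (kernelAvg φ (∂[i] (∂[j] u)) z)
      (-(r⁻¹ * kernelAvg (∂[j] (∂[i] ψ)) (lap u) z r)) r := fun z r hr =>
    h.hasDerivAt_kernelAvg_dirDeriv_dirDeriv hu i j z (ne_of_gt hr)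
  have hV'near : ∀ z, ∀ r ∈ Ioi (0 : ℝ),
      |-(r⁻¹ * kernelAvg (∂[j] (∂[i] ψ)) (lap u) z r)| ≤ a * B * r ^ (α - 1) := fun z r hr =>
    (abs_neg _).trans_le (abs_inv_mul_le_rpow hr (hnear _ _ hlapc hB hlap z r (le_of_lt hr)))
  have hρ : 0 < ‖x - y‖ := norm_sub_pos_iff.2 hxy
  have hV'far : ∀ r ∈ Ioi ‖x - y‖, |-(r⁻¹ * kernelAvg (∂[j] (∂[i] ψ)) (lap u) x r) -
      -(r⁻¹ * kernelAvg (∂[j] (∂[i] ψ)) (lap u) y r)| ≤ b * B * ‖x - y‖ * r ^ (α - 2) := by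
    intro r hr
    have hr₀ := hρ.trans hr
    rw [← neg_sub', abs_neg, ← mul_sub, show α - 2 = α - 1 - 1 by ring]
    exact abs_inv_mul_le_rpow hr₀ (hfar _ _ hlapc hB hlap x y r hr₀ (le_of_lt hr))
  have hV := abs_sub_le_rpow_of_scale_deriv_le hα hρ (mul_nonneg hb hB) (hVc x) (hVc y) (hV' x)
    (hV' y) (hV'near x) (hV'near y) hV'far
    (tendsto_kernelAvg_sub_atTop h.contDiff h.hasCompactSupport hDc hN x y)
  simp only [kernelAvg_zero, h.integral_eq_one, one_mul] at hV
  exact hV.trans_eq (by ring)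

theorem exists_holder_hess_of_holder_lap (d : ℕ) {α : ℝ} (hα : α ∈ Ioo (0 : ℝ) 1) :
    ∃ S, 0 < S ∧ ∀ (u : (Fin d → ℝ) → ℝ) (N B : ℝ), ContDiff ℝ 2 u → 0 ≤ B →
      (∀ i j x, |hess u x i j| ≤ N) → (∀ x y, |lap u x - lap u y| ≤ B * ‖x - y‖ ^ α) →
      ∀ i j x y, |hess u x i j - hess u y i j| ≤ S * B * ‖x - y‖ ^ α := by
  have hentry : ∀ i j : Fin d, ∃ C, ∀ (u : (Fin d → ℝ) → ℝ) (N B : ℝ), ContDiff ℝ 2 u → 0 ≤ B →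
      (∀ x, |∂[i] (∂[j] u) x| ≤ N) → (∀ x y, |lap u x - lap u y| ≤ B * ‖x - y‖ ^ α) →
      ∀ x y, |∂[i] (∂[j] u) x - ∂[i] (∂[j] u) y| ≤ C * B * ‖x - y‖ ^ α := by
    intro i j
    obtain ⟨ψ, φ, h⟩ := exists_isRadialKernel i
    exact h.exists_holder_dirDeriv_dirDeriv hα i j
  choose C hC using hentry
  obtain ⟨S, hS⟩ := Finite.bddAbove_range fun p : Fin d × Fin d => C p.1 p.2
  refine ⟨max S 1, by positivity, fun u N B hu hB hN hlap i j x y => ?_⟩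
  have hCS : C i j ≤ max S 1 := (hS ⟨(i, j), rfl⟩).trans (le_max_left S 1)
  refine (hC i j u N B hu hB (hN i j) hlap x y).trans ?_
  gcongr

end Schauder

section Periodic

variable {d : ℕ} {f : (Fin d → ℝ) → ℝ}

lemma exists_add_latVec_mem_Icc (x : Fin d → ℝ) :
    ∃ k : Fin d → ℤ, x + latVec k ∈ Icc (0 : Fin d → ℝ) 1 := by
  refine ⟨fun i => -⌊x i⌋, fun i => ?_, fun i => ?_⟩
  · simpa [latVec] using Int.floor_le (x i)
  · simpa [latVec, add_comm] using (Int.lt_floor_add_one (x i)).le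

lemma latVec_single (i : Fin d) : latVec (Pi.single i 1) = Pi.single i (1 : ℝ) := by
  ext j
  simp [latVec, Pi.single_apply]

lemma ZPeriodic.exists_forall_le (hper : ZPeriodic f) (hf : Continuous f) :
    ∃ x₀, ∀ x, f x ≤ f x₀ := by
  obtain ⟨x₀, -, hmax⟩ := (isCompact_Icc (a := (0 : Fin d → ℝ)) (b := 1)).exists_isMaxOn
    (nonempty_Icc.2 zero_le_one) hf.continuousOn
  refine ⟨x₀, fun x => ?_⟩
  obtain ⟨k, hk⟩ := exists_add_latVec_mem_Icc x
  exact (hper x k).symm.trans_le (hmax hk)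

lemma zPeriodic_dirDeriv (hper : ZPeriodic f) (v : Fin d → ℝ) : ZPeriodic (dirDeriv v f) := by
  intro x k
  have htranslate : (fun y => f (y + latVec k)) = f := funext fun y => hper y k
  rw [dirDeriv, ← fderiv_comp_add_right, htranslate, dirDeriv]

end Periodic

section TorusDistance

variable {d : ℕ} {f : (Fin d → ℝ) → ℝ} {α : ℝ}

lemma euclNorm_nonneg (v : Fin d → ℝ) : 0 ≤ euclNorm v := Real.sqrt_nonneg _

lemma norm_le_euclNorm (v : Fin d → ℝ) : ‖v‖ ≤ euclNorm v :=
  (pi_norm_le_iff_of_nonneg (euclNorm_nonneg v)).2 fun i => Real.abs_le_sqrt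
    (Finset.single_le_sum (f := fun i => v i ^ 2) (fun _ _ => sq_nonneg _) (Finset.mem_univ i))

lemma euclNorm_le {v : Fin d → ℝ} {c : ℝ} (hc : 0 ≤ c) (hv : ∀ i, |v i| ≤ c) :
    euclNorm v ≤ d * c := by
  refine Real.sqrt_le_iff.2 ⟨by positivity, ?_⟩
  calc ∑ i, v i ^ 2 ≤ ∑ _i : Fin d, c ^ 2 :=
        Finset.sum_le_sum fun i _ => sq_le_sq.2 ((hv i).trans (le_abs_self c))
    _ = d * c ^ 2 := by simp
    _ ≤ d ^ 2 * c ^ 2 := by gcongr; exact_mod_cast Nat.le_self_pow two_ne_zero d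
    _ = (d * c) ^ 2 := (mul_pow _ _ _).symm

lemma frobNorm_eq_euclNorm (A : Fin d → Fin d → ℝ) :
    frobNorm A = euclNorm fun i => euclNorm (A i) := by
  simp only [frobNorm, euclNorm, Real.sq_sqrt (Finset.sum_nonneg fun _ _ => sq_nonneg _)]

lemma frobNorm_le {A : Fin d → Fin d → ℝ} {c : ℝ} (hc : 0 ≤ c) (hA : ∀ i j, |A i j| ≤ c) :
    frobNorm A ≤ d * (d * c) := by
  rw [frobNorm_eq_euclNorm]
  refine euclNorm_le (by positivity) fun i => ?_
  rw [abs_of_nonneg (euclNorm_nonneg _)]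
  exact euclNorm_le hc (hA i)

lemma tdist_nonneg (x y : Fin d → ℝ) : 0 ≤ tdist x y := le_ciInf fun _ => euclNorm_nonneg _

lemma tdist_le (x y : Fin d → ℝ) : tdist x y ≤ d * ‖x - y‖ := by
  have hbdd : BddBelow (range fun k : Fin d → ℤ => euclNorm (x - y + latVec k)) :=
    ⟨0, forall_mem_range.2 fun _ => euclNorm_nonneg _⟩
  have hzero : x - y + latVec 0 = x - y := by ext; simp [latVec]
  calc tdist x y ≤ euclNorm (x - y + latVec 0) := ciInf_le hbdd 0
    _ ≤ d * ‖x - y‖ := by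
      rw [hzero]
      exact euclNorm_le (norm_nonneg _) fun i => norm_le_pi_norm (x - y) i

lemma tdist_rpow_le (hα₀ : 0 ≤ α) (hα₁ : α ≤ 1) (x y : Fin d → ℝ) :
    tdist x y ^ α ≤ (d + 1) * ‖x - y‖ ^ α := by
  calc tdist x y ^ α ≤ ((d + 1) * ‖x - y‖) ^ α := by
        refine Real.rpow_le_rpow (tdist_nonneg x y) ((tdist_le x y).trans ?_) hα₀
        gcongr
        exact le_add_of_nonneg_right zero_le_one
    _ = (d + 1) ^ α * ‖x - y‖ ^ α := Real.mul_rpow (by positivity) (norm_nonneg _)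
    _ ≤ (d + 1) * ‖x - y‖ ^ α := by
        gcongr
        exact Real.rpow_le_self_of_one_le (le_add_of_nonneg_left d.cast_nonneg) hα₁

lemma ZPeriodic.abs_sub_le_tdist_rpow {B : ℝ} (hper : ZPeriodic f) (hα : 0 < α) (hB : 0 ≤ B)
    (hf : ∀ x y, |f x - f y| ≤ B * ‖x - y‖ ^ α) (x y : Fin d → ℝ) :
    |f x - f y| ≤ B * tdist x y ^ α := by
  have hlift (k : Fin d → ℤ) : |f x - f y| ≤ B * euclNorm (x - y + latVec k) ^ α := by
    calc |f x - f y| = |f (x + latVec k) - f y| := by rw [hper]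
      _ ≤ B * ‖x - y + latVec k‖ ^ α := by
          rw [sub_add_eq_add_sub]
          exact hf _ _
      _ ≤ B * euclNorm (x - y + latVec k) ^ α := by
          gcongr
          exact norm_le_euclNorm _
  obtain rfl | hB := hB.eq_or_lt
  · simpa using hlift 0
  have hle_iff {t : ℝ} (ht : 0 ≤ t) :
      (|f x - f y| / B) ^ α⁻¹ ≤ t ↔ |f x - f y| ≤ B * t ^ α := by
    rw [Real.rpow_inv_le_iff_of_pos (by positivity) ht hα, div_le_iff₀' hB]
  exact (hle_iff (tdist_nonneg x y)).1
    (le_ciInf fun k => (hle_iff (euclNorm_nonneg _)).2 (hlift k))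

end TorusDistance

section PeriodicHolder

variable {d : ℕ} {f u : (Fin d → ℝ) → ℝ} {α A H : ℝ}

lemma abs_sub_le_of_abs_partial_le {M : ℝ} (hf : Differentiable ℝ f) (hM₀ : 0 ≤ M)
    (hM : ∀ k x, |∂[k] f x| ≤ M) (x y : Fin d → ℝ) : |f x - f y| ≤ d * M * ‖x - y‖ := by
  refine Convex.norm_image_sub_le_of_norm_fderiv_le (𝕜 := ℝ) (fun z _ => hf z)
    (fun z _ => ContinuousLinearMap.opNorm_le_bound _ (by positivity) fun v => ?_)
    convex_univ (mem_univ y) (mem_univ x)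
  calc ‖fderiv ℝ f z v‖ ≤ ∑ k, ‖v k * ∂[k] f z‖ := by
        rw [fderiv_eq_sum_dirDeriv]
        exact norm_sum_le _ _
    _ ≤ ∑ _k : Fin d, ‖v‖ * M := Finset.sum_le_sum fun k _ => by
        rw [norm_mul]
        exact mul_le_mul (norm_le_pi_norm v k) (hM k z) (norm_nonneg _) (norm_nonneg _)
    _ = d * M * ‖v‖ := by simp only [Finset.sum_const, Finset.card_fin, nsmul_eq_mul]; ring

lemma ZPeriodic.abs_sub_le_rpow_of_lipschitz {M : ℝ} (hper : ZPeriodic f) (hα₀ : 0 ≤ α)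
    (hα₁ : α ≤ 1) (hM : 0 ≤ M) (hf : ∀ x y, |f x - f y| ≤ M * ‖x - y‖) (x y : Fin d → ℝ) :
    |f x - f y| ≤ M * ‖x - y‖ ^ α := by
  obtain hnear | hfar := le_total ‖x - y‖ 1
  · refine (hf x y).trans ?_
    gcongr
    exact Real.self_le_rpow_of_le_one (norm_nonneg _) hnear hα₁
  · obtain ⟨k, hk₀, hk₁⟩ := exists_add_latVec_mem_Icc (x - y)
    have hunit : ‖x - y + latVec k‖ ≤ 1 := (pi_norm_le_iff_of_nonneg zero_le_one).2 fun i =>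
      (abs_of_nonneg (hk₀ i)).trans_le (hk₁ i)
    calc |f x - f y| = |f (x + latVec k) - f y| := by rw [hper]
      _ ≤ M * ‖x - y + latVec k‖ := by
          rw [sub_add_eq_add_sub]
          exact hf _ _
      _ ≤ M * ‖x - y‖ ^ α := by
          gcongr
          exact hunit.trans (Real.one_le_rpow hfar hα₀)

lemma ZPeriodic.abs_sub_le_rpow_of_abs_partial_le {M : ℝ} (hper : ZPeriodic f) (hα₀ : 0 ≤ α)
    (hα₁ : α ≤ 1) (hf : Differentiable ℝ f) (hM₀ : 0 ≤ M) (hM : ∀ k x, |∂[k] f x| ≤ M)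
    (x y : Fin d → ℝ) : |f x - f y| ≤ d * M * ‖x - y‖ ^ α :=
  hper.abs_sub_le_rpow_of_lipschitz hα₀ hα₁ (by positivity)
    (abs_sub_le_of_abs_partial_le hf hM₀ hM) x y

lemma ZPeriodic.exists_partial_eq_zero (hper : ZPeriodic f) (hf : Differentiable ℝ f) (i : Fin d)
    (x : Fin d → ℝ) : ∃ t ∈ Ioo (0 : ℝ) 1, ∂[i] f (x + t • Pi.single i 1) = 0 := by
  have hline := hasDerivAt_comp_add_smul hf x (Pi.single i (1 : ℝ))
  refine exists_hasDerivAt_eq_zero zero_lt_one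
    (fun t _ => (hline t).continuousAt.continuousWithinAt) ?_ fun t _ => hline t
  simp only [zero_smul, add_zero, one_smul, ← latVec_single, hper x]

lemma ZPeriodic.abs_partial_le_of_oscillation_le {H : ℝ} (hper : ZPeriodic f)
    (hf : Differentiable ℝ f) {i : Fin d}
    (hosc : ∀ x, ∀ t ∈ Ioo (0 : ℝ) 1, |∂[i] f (x + t • Pi.single i 1) - ∂[i] f x| ≤ H)
    (x : Fin d → ℝ) : |∂[i] f x| ≤ H := by
  obtain ⟨t, ht, hzero⟩ := hper.exists_partial_eq_zero hf i x
  simpa only [hzero, zero_sub, abs_neg] using hosc x t ht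

lemma ZPeriodic.abs_hess_le_of_holder (hper : ZPeriodic u) (hα : 0 ≤ α) (hu : ContDiff ℝ 2 u)
    (hH₀ : 0 ≤ H) (hH : ∀ i j x y, |hess u x i j - hess u y i j| ≤ H * ‖x - y‖ ^ α)
    (i j : Fin d) (x : Fin d → ℝ) : |hess u x i j| ≤ H := by
  refine (zPeriodic_dirDeriv hper _).abs_partial_le_of_oscillation_le
    ((contDiff_one_dirDeriv hu).differentiable one_ne_zero) (fun x t ht => ?_) x
  calc |hess u (x + t • Pi.single i 1) i j - hess u x i j|
      ≤ H * ‖x + t • Pi.single i 1 - x‖ ^ α := hH i j _ _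
    _ = H * t ^ α := by
        rw [add_sub_cancel_left, norm_smul, Pi.norm_single, norm_one, mul_one,
          Real.norm_of_nonneg ht.1.le]
    _ ≤ H := mul_le_of_le_one_right hH₀ (Real.rpow_le_one ht.1.le ht.2.le hα)

lemma ZPeriodic.abs_grad_le_of_abs_hess_le (hper : ZPeriodic u) (hu : ContDiff ℝ 2 u)
    (hH : ∀ i j x, |hess u x i j| ≤ H) (j : Fin d) (x : Fin d → ℝ) : |grad u x j| ≤ H := by
  have hH₀ : 0 ≤ H := (abs_nonneg _).trans (hH j j x)
  refine hper.abs_partial_le_of_oscillation_le (hu.differentiable two_ne_zero)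
    (fun x t ht => ?_) x
  calc |∂[j] u (x + t • Pi.single j 1) - ∂[j] u x| ≤ H * t := abs_sub_le_of_abs_dirDeriv_le
        ((contDiff_one_dirDeriv hu).differentiable one_ne_zero) (hH j j) x ht.1.le
    _ ≤ H := mul_le_of_le_one_right hH₀ ht.2.le

lemma HolderBnd.abs_le {K : ℝ} (hf : HolderBnd α f K) (x : Fin d → ℝ) : |f x| ≤ K := by
  obtain ⟨A, B, -, hB, hAB, hA, -⟩ := hf
  linarith [hA x]

lemma HolderBnd.abs_sub_le {K : ℝ} (hf : HolderBnd α f K) (hα₀ : 0 ≤ α) (hα₁ : α ≤ 1)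
    (x y : Fin d → ℝ) : |f x - f y| ≤ (d + 1) * K * ‖x - y‖ ^ α := by
  obtain ⟨A, B, hA, hB, hAB, -, hf⟩ := hf
  calc |f x - f y| ≤ B * tdist x y ^ α := hf x y
    _ ≤ K * ((d + 1) * ‖x - y‖ ^ α) := mul_le_mul (by linarith) (tdist_rpow_le hα₀ hα₁ x y)
        (Real.rpow_nonneg (tdist_nonneg x y) α) (by linarith)
    _ = (d + 1) * K * ‖x - y‖ ^ α := by ring

lemma holderBndVec_of_forall {G : (Fin d → ℝ) → Fin d → ℝ} {B : ℝ} (hA : 0 ≤ A) (hB : 0 ≤ B)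
    (hG : ∀ i x, |G x i| ≤ A) (hG' : ∀ i x y, |G x i - G y i| ≤ B * tdist x y ^ α) :
    HolderBndVec α G (d * A + d * B) := by
  refine ⟨d * A, d * B, by positivity, by positivity, le_rfl,
    fun x => euclNorm_le hA fun i => hG i x, fun x y => ?_⟩
  have htdist : 0 ≤ tdist x y ^ α := Real.rpow_nonneg (tdist_nonneg x y) α
  rw [mul_assoc]
  exact euclNorm_le (by positivity) fun i => hG' i x y

lemma holderBndMat_of_forall {G : (Fin d → ℝ) → Fin d → Fin d → ℝ} {B : ℝ} (hA : 0 ≤ A)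
    (hB : 0 ≤ B) (hG : ∀ i j x, |G x i j| ≤ A)
    (hG' : ∀ i j x y, |G x i j - G y i j| ≤ B * tdist x y ^ α) :
    HolderBndMat α G (d * (d * A) + d * (d * B)) := by
  refine ⟨d * (d * A), d * (d * B), by positivity, by positivity, le_rfl,
    fun x => frobNorm_le hA fun i j => hG i j x, fun x y => ?_⟩
  have htdist : 0 ≤ tdist x y ^ α := Real.rpow_nonneg (tdist_nonneg x y) α
  rw [mul_assoc, mul_assoc]
  exact frobNorm_le (by positivity) fun i j => hG' i j x y

lemma C2Bnd.mono {K K' : ℝ} (hu : C2Bnd α u K) (hK : K ≤ K') : C2Bnd α u K' := by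
  obtain ⟨K₀, K₁, K₂, hK₀, hK₁, hK₂, hsum, hbnds⟩ := hu
  exact ⟨K₀, K₁, K₂, hK₀, hK₁, hK₂, hsum.trans hK, hbnds⟩

lemma ZPeriodic.c2Bnd_of_holder_hess (hper : ZPeriodic u) (hα : α ∈ Ioo (0 : ℝ) 1)
    (hu : ContDiff ℝ 2 u) (hA : ∀ x, |u x| ≤ A) (hH₀ : 0 ≤ H)
    (hH : ∀ i j x y, |hess u x i j - hess u y i j| ≤ H * ‖x - y‖ ^ α) :
    C2Bnd α u (A + (2 * d + 3 * d ^ 2) * H) := by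
  have hA₀ : 0 ≤ A := (abs_nonneg _).trans (hA 0)
  have hhess := hper.abs_hess_le_of_holder hα.1.le hu hH₀ hH
  have hgrad := hper.abs_grad_le_of_abs_hess_le hu hhess
  have holder {f : (Fin d → ℝ) → ℝ} (hf : ZPeriodic f) (hf₁ : Differentiable ℝ f)
      (hfH : ∀ k x, |∂[k] f x| ≤ H) (x y : Fin d → ℝ) : |f x - f y| ≤ d * H * tdist x y ^ α :=
    hf.abs_sub_le_tdist_rpow hα.1 (by positivity)
      (hf.abs_sub_le_rpow_of_abs_partial_le hα.1.le hα.2.le hf₁ hH₀ hfH) x y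
  have hper₁ (j : Fin d) : ZPeriodic (∂[j] u) := zPeriodic_dirDeriv hper _
  refine ⟨A + d * H, d * H + d * (d * H), d * (d * H) + d * (d * H), by positivity, by positivity,
    by positivity, le_of_eq (by ring), ?_, ?_, ?_⟩
  · exact ⟨A, d * H, hA₀, by positivity, le_rfl, hA,
      holder hper (hu.differentiable two_ne_zero) hgrad⟩
  · exact holderBndVec_of_forall hH₀ (by positivity) hgrad fun j =>
      holder (hper₁ j) ((contDiff_one_dirDeriv hu).differentiable one_ne_zero)
        fun i => hhess i j
  · exact holderBndMat_of_forall hH₀ hH₀ hhess fun i j =>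
      (zPeriodic_dirDeriv (hper₁ j) _).abs_sub_le_tdist_rpow hα.1 hH₀ (hH i j)

end PeriodicHolder

section SemilinearPoisson

variable {d : ℕ} {u : (Fin d → ℝ) → ℝ} {α : ℝ}

lemma ZPeriodic.exists_forall_le_and_lap_nonpos (hper : ZPeriodic u) (hu : ContDiff ℝ 2 u) :
    ∃ x₀, (∀ x, u x ≤ u x₀) ∧ lap u x₀ ≤ 0 := by
  obtain ⟨x₀, hmax⟩ := hper.exists_forall_le hu.continuous
  exact ⟨x₀, hmax, Finset.sum_nonpos fun k _ =>
    dirDeriv_dirDeriv_nonpos_of_forall_le (v := Pi.single k 1) hu hmax⟩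

lemma lap_neg (u : (Fin d → ℝ) → ℝ) (x : Fin d → ℝ) : lap (-u) x = -lap u x := by
  change ∑ k, ∂[k] (∂[k] (-u)) x = -∑ k, ∂[k] (∂[k] u) x
  simp only [dirDeriv_neg, Pi.neg_apply, Finset.sum_neg_distrib]

lemma ZPeriodic.abs_le_of_mul_lap_eq_exp_sub_one {U : (Fin d → ℝ) → ℝ} {κ A : ℝ}
    (hper : ZPeriodic u) (hu : ContDiff ℝ 2 u) (hκ : 0 ≤ κ) (hU : ∀ x, |U x| ≤ A)
    (heq : ∀ x, κ * lap u x = exp (U x + u x) - 1) (x : Fin d → ℝ) : |u x| ≤ A := by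
  refine abs_le.2 ⟨?_, ?_⟩
  · have hper_neg : ZPeriodic (-u) := fun x k => congrArg Neg.neg (hper x k)
    obtain ⟨x₀, hmin, hlap⟩ := hper_neg.exists_forall_le_and_lap_nonpos hu.neg
    rw [lap_neg] at hlap
    have hexp : 1 ≤ exp (U x₀ + u x₀) := by
      linarith [heq x₀, mul_nonneg hκ (neg_nonpos.1 hlap)]
    have hmin_x : -u x ≤ -u x₀ := hmin x
    linarith [Real.one_le_exp_iff.1 hexp, (abs_le.1 (hU x₀)).2]
  · obtain ⟨x₀, hmax, hlap⟩ := hper.exists_forall_le_and_lap_nonpos hu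
    have hexp : exp (U x₀ + u x₀) ≤ 1 := by
      linarith [heq x₀, mul_nonpos_of_nonneg_of_nonpos hκ hlap]
    linarith [Real.exp_le_one_iff.1 hexp, (abs_le.1 (hU x₀)).1, hmax x]

lemma abs_lap_sub_lap_le_of_mul_lap_eq_exp_sub_one {w : (Fin d → ℝ) → ℝ} {κ M : ℝ} (hκ : 0 < κ)
    (hw : ∀ x, w x ≤ M) (heq : ∀ x, κ * lap u x = exp (w x) - 1) (x y : Fin d → ℝ) :
    |lap u x - lap u y| ≤ exp M / κ * |w x - w y| := by
  have hdiff : lap u x - lap u y = (exp (w x) - exp (w y)) / κ := by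
    rw [eq_div_iff hκ.ne']
    linarith [heq x, heq y]
  rw [hdiff, abs_div, abs_of_pos hκ, div_mul_eq_mul_div]
  gcongr
  exact abs_exp_sub_exp_le (hw x) (hw y)

lemma ZPeriodic.abs_lap_sub_lap_le_of_norm_grad_le {U : (Fin d → ℝ) → ℝ} {κ M₁ M₂ L : ℝ}
    (hper : ZPeriodic u) (hα : α ∈ Ioo (0 : ℝ) 1) (hu : ContDiff ℝ 2 u) (hκ : 0 < κ)
    (hU : ∀ x, |U x| ≤ M₁) (hUα : HolderBnd α U M₂)
    (heq : ∀ x, κ * lap u x = exp (U x + u x) - 1) (hL : ∀ x, ‖grad u x‖ ≤ L)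
    (x y : Fin d → ℝ) :
    |lap u x - lap u y| ≤ (d + 1) * (exp (2 * M₁) / κ) * (M₂ + L) * ‖x - y‖ ^ α := by
  have hexponent (x) : U x + u x ≤ 2 * M₁ := by
    linarith [le_of_abs_le (hU x),
      le_of_abs_le (hper.abs_le_of_mul_lap_eq_exp_sub_one hu hκ.le hU heq x)]
  have hL₀ : 0 ≤ L := (norm_nonneg _).trans (hL 0)
  have huα : |u x - u y| ≤ (d + 1) * L * ‖x - y‖ ^ α := by
    refine (hper.abs_sub_le_rpow_of_abs_partial_le hα.1.le hα.2.le
      (hu.differentiable two_ne_zero) hL₀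
      (fun k x => (norm_le_pi_norm (grad u x) k).trans (hL x)) x y).trans ?_
    gcongr
    exact le_add_of_nonneg_right zero_le_one
  calc |lap u x - lap u y| ≤ exp (2 * M₁) / κ * |U x + u x - (U y + u y)| :=
        abs_lap_sub_lap_le_of_mul_lap_eq_exp_sub_one hκ hexponent heq x y
    _ ≤ exp (2 * M₁) / κ *
          ((d + 1) * M₂ * ‖x - y‖ ^ α + (d + 1) * L * ‖x - y‖ ^ α) := by
        rw [add_sub_add_comm]
        gcongr
        exact (abs_add_le _ _).trans (add_le_add (hUα.abs_sub_le hα.1.le hα.2.le x y) huα)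
    _ = (d + 1) * (exp (2 * M₁) / κ) * (M₂ + L) * ‖x - y‖ ^ α := by ring

lemma ZPeriodic.exists_abs_hess_le (hper : ZPeriodic u) (hu : ContDiff ℝ 2 u) :
    ∃ N, ∀ i j x, |hess u x i j| ≤ N := by
  have hcont : Continuous fun x => ‖hess u x‖ := continuous_norm.comp <|
    continuous_pi fun i => continuous_pi fun j => continuous_dirDeriv_dirDeriv hu
  have hper_norm : ZPeriodic fun x => ‖hess u x‖ := fun x k => congrArg norm <|
    funext₂ fun i j => zPeriodic_dirDeriv (zPeriodic_dirDeriv hper _) _ x k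
  obtain ⟨x₀, hmax⟩ := hper_norm.exists_forall_le hcont
  exact ⟨‖hess u x₀‖, fun i j x =>
    ((norm_le_pi_norm (hess u x i) j).trans (norm_le_pi_norm (hess u x) i)).trans (hmax x)⟩

lemma ZPeriodic.exists_forall_norm_grad_le (hper : ZPeriodic u) (hu : ContDiff ℝ 1 u) :
    ∃ x₀, ∀ x, ‖grad u x‖ ≤ ‖grad u x₀‖ :=
  ZPeriodic.exists_forall_le (f := fun x => ‖grad u x‖)
    (fun x k => congrArg norm <| funext fun _ => zPeriodic_dirDeriv hper _ x k)
    (continuous_norm.comp <| continuous_pi fun _ => continuous_dirDeriv hu)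

lemma le_mul_of_le_interpolation {M L P : ℝ} (hM : 0 ≤ M) (hL : 0 ≤ L) (hP : 0 ≤ P)
    (hinterp : ∀ h > 0, L ≤ 2 * M / h + h * (P * (M + L))) : M + L ≤ M * (6 + 8 * P) := by
  have hpos : 0 < 1 + 2 * P := by positivity
  have hhalf : (1 + 2 * P)⁻¹ * P ≤ 1 / 2 := by
    rw [inv_mul_le_iff₀ hpos]
    linarith
  have habsorb := calc
    L ≤ 2 * M / (1 + 2 * P)⁻¹ + (1 + 2 * P)⁻¹ * (P * (M + L)) := hinterp _ (inv_pos.2 hpos)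
    _ = 2 * M * (1 + 2 * P) + (1 + 2 * P)⁻¹ * P * (M + L) := by
        rw [div_inv_eq_mul, mul_assoc _ P]
    _ ≤ 2 * M * (1 + 2 * P) + 1 / 2 * (M + L) := by gcongr
  linarith

theorem exists_holder_hess_of_holder_lap_le_grad (d : ℕ) (hα : α ∈ Ioo (0 : ℝ) 1) :
    ∃ S, 0 < S ∧ ∀ (u : (Fin d → ℝ) → ℝ) (K M : ℝ), ContDiff ℝ 2 u → ZPeriodic u → 0 ≤ K →
      (∀ x, |u x| ≤ M) →
      (∀ L, (∀ x, ‖grad u x‖ ≤ L) →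
        ∀ x y, |lap u x - lap u y| ≤ K * (M + L) * ‖x - y‖ ^ α) →
      ∀ i j x y, |hess u x i j - hess u y i j| ≤
        M * (6 * (S * K) + 8 * (S * K) ^ 2) * ‖x - y‖ ^ α := by
  obtain ⟨S, hS, hschauder⟩ := exists_holder_hess_of_holder_lap d hα
  refine ⟨S, hS, fun u K M hu hper hK hM hlap i j x y => ?_⟩
  have hM₀ : 0 ≤ M := (abs_nonneg _).trans (hM x)
  obtain ⟨N, hN⟩ := hper.exists_abs_hess_le hu
  obtain ⟨x₀, hx₀⟩ := hper.exists_forall_norm_grad_le (hu.of_le one_le_two)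
  set L := ‖grad u x₀‖
  have hhess (i j x y) : |hess u x i j - hess u y i j| ≤ S * K * (M + L) * ‖x - y‖ ^ α := by
    rw [mul_assoc S]
    exact hschauder u N (K * (M + L)) hu (by positivity) hN (hlap L hx₀) i j x y
  have hsup := hper.abs_hess_le_of_holder hα.1.le hu (by positivity) hhess
  have hgrad : M + L ≤ M * (6 + 8 * (S * K)) := by
    refine le_mul_of_le_interpolation hM₀ (norm_nonneg _) (by positivity) fun h hh => ?_
    exact (pi_norm_le_iff_of_nonneg (by positivity)).2 fun k =>
      abs_dirDeriv_le_of_abs_le hu hh hM (hsup k k) x₀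
  calc |hess u x i j - hess u y i j| ≤ S * K * (M + L) * ‖x - y‖ ^ α := hhess i j x y
    _ ≤ S * K * (M * (6 + 8 * (S * K))) * ‖x - y‖ ^ α := by gcongr
    _ = M * (6 * (S * K) + 8 * (S * K) ^ 2) * ‖x - y‖ ^ α := by ring

lemma one_add_mul_quadratic_le_exp {c P : ℝ} (hc : 0 ≤ c) (hP : 0 ≤ P) :
    1 + c * (6 * P + 8 * P ^ 2) ≤ exp (6 * (c + 1) * P) := by
  refine le_trans ?_ (Real.quadratic_le_exp_of_nonneg (by positivity))
  nlinarith [mul_nonneg hc (sq_nonneg P), sq_nonneg (c * P), sq_nonneg P]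

theorem statement7_general (d : ℕ) (hα : α ∈ Ioo (0 : ℝ) 1) :
    ∃ C, 0 < C ∧ ∀ ε > 0, ∀ (M₁ M₂ : ℝ) (Ubar Uhat : (Fin d → ℝ) → ℝ),
      (∀ x, |Ubar x| ≤ M₁) → HolderBnd α Ubar M₂ → ContDiff ℝ 2 Uhat → ZPeriodic Uhat →
      (∀ x, ε ^ 2 * lap Uhat x = exp (Ubar x + Uhat x) - 1) →
      C2Bnd α Uhat (M₂ * exp (C / ε ^ 2 * exp (2 * M₁))) := by
  obtain ⟨S, hS, hschauder⟩ := exists_holder_hess_of_holder_lap_le_grad d hα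
  refine ⟨6 * (2 * d + 3 * d ^ 2 + 1) * (S * (d + 1)), by positivity,
    fun ε hε M₁ M₂ U u hU hUα hu hper heq => ?_⟩
  have hsup := hper.abs_le_of_mul_lap_eq_exp_sub_one hu (sq_nonneg ε) hUα.abs_le heq
  have hM₂ : 0 ≤ M₂ := (abs_nonneg _).trans (hsup 0)
  set K := (d + 1) * (exp (2 * M₁) / ε ^ 2) with hK
  have hhess := hschauder u K M₂ hu hper (by positivity) hsup fun L hL =>
    hper.abs_lap_sub_lap_le_of_norm_grad_le hα hu (by positivity) hU hUα heq hL
  refine (hper.c2Bnd_of_holder_hess hα hu hsup (by positivity) hhess).mono ?_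
  calc M₂ + (2 * d + 3 * d ^ 2) * (M₂ * (6 * (S * K) + 8 * (S * K) ^ 2))
      = M₂ * (1 + (2 * d + 3 * d ^ 2) * (6 * (S * K) + 8 * (S * K) ^ 2)) := by ring
    _ ≤ M₂ * exp (6 * (2 * d + 3 * d ^ 2 + 1) * (S * K)) := by
        gcongr
        exact one_add_mul_quadratic_le_exp (by positivity) (by positivity)
    _ = M₂ * exp (6 * (2 * d + 3 * d ^ 2 + 1) * (S * (d + 1)) / ε ^ 2 * exp (2 * M₁)) := by
        rw [hK]
        ring_nf

end SemilinearPoisson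

/-- `C^{2,α}` estimate for `Û` solving `ε² Δ Û = e^{Ū+Û} − 1` with
`sup |Ū| ≤ M₁` and `‖Ū‖_{C^{0,α}} ≤ M₂`. -/
theorem statement7 (d : ℕ) (hd : d = 2 ∨ d = 3) (α : ℝ) (hα : α ∈ Set.Ioo (0:ℝ) 1) :
    ∃ C : ℝ, 0 < C ∧
      ∀ ε : ℝ, 0 < ε → ∀ M₁ M₂ : ℝ, 0 ≤ M₁ → 0 ≤ M₂ →
      ∀ Ubar Uhat : (Fin d → ℝ) → ℝ,
        ZPeriodic Ubar → (∀ x, |Ubar x| ≤ M₁) → HolderBnd α Ubar M₂ →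
        ContDiff ℝ 2 Uhat → ZPeriodic Uhat →
        (∀ x, ε ^ 2 * lap Uhat x = Real.exp (Ubar x + Uhat x) - 1) →
        C2Bnd α Uhat
          ((M₂ + C / ε ^ 2 * (Real.exp (2 * M₁) + 1)) *
            Real.exp (C / ε ^ 2 * (Real.exp (2 * M₁) + 1))) := by
  obtain ⟨C, hC, hbound⟩ := statement7_general d hα
  refine ⟨C, hC, fun ε hε M₁ M₂ _ hM₂ Ubar Uhat _ hU hUα hu hper heq =>
    (hbound ε hε M₁ M₂ Ubar Uhat hU hUα hu hper heq).mono ?_⟩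
  gcongr
  · exact le_add_of_nonneg_right (by positivity)
  · exact le_add_of_nonneg_right zero_le_one
end

section
/- There exists a constant C, depending only on the dimension d, such that the following holds for all ε > 0. For i = 1, 2, let Ū_i ∈ C(𝕋^d) be bounded and let Û_i ∈ C²(𝕋^d) satisfy ε² Δ Û_i = e^{Ū_i + Û_i} − 1 pointwise on 𝕋^d. Then ε² ∫_{𝕋^d} |∇Û_1 − ∇Û_2|² dx ≤ exp[ C ( max_i sup_x |Ū_i(x)| + max_i sup_x |Û_i(x)| ) ] · ∫_{𝕋^d} |Ū_1 − Ū_2|² dx. -/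
open MeasureTheory Real Set
open scoped ENNReal

/-!
The difference `w = U₁ - U₂` of two solutions of `κ Δ Uᵢ = F(Vᵢ + Uᵢ) - ρ` satisfies
`κ Δ w = F a - F b`, where `a = V₁ + U₁` and `b = V₂ + U₂`. Testing with `w = (a - b) - (V₁ - V₂)`
gives
`κ ∫ |∇w|² = ∫ (F a - F b) ((V₁ - V₂) - (a - b))`.
If `F` is nondecreasing and `K`-Lipschitz, then `(F a - F b)² ≤ K (F a - F b) (a - b)`, so the good
term `-(F a - F b) (a - b)` absorbs the cross term at the cost of `K / 4 * (V₁ - V₂)²`.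
On `(-∞, M]` the exponential is nondecreasing and `exp M`-Lipschitz.
-/

theorem sq_sub_le_mul_of_monotoneOn_of_lipschitzOnWith {F : ℝ → ℝ} {s : Set ℝ} {K : NNReal}
    (hmono : MonotoneOn F s) (hlip : LipschitzOnWith K F s) {a b : ℝ} (ha : a ∈ s) (hb : b ∈ s) :
    (F a - F b) ^ 2 ≤ K * ((F a - F b) * (a - b)) := by
  wlog hba : b ≤ a generalizing a b
  · linarith [this hb ha (le_of_not_ge hba)]
  have hF : 0 ≤ F a - F b := sub_nonneg.2 (hmono hb ha hba)
  have hbound : F a - F b ≤ K * (a - b) := by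
    simpa only [Real.dist_eq, abs_of_nonneg hF, abs_of_nonneg (sub_nonneg.2 hba)]
      using hlip.dist_le_mul a ha b hb
  calc (F a - F b) ^ 2 = (F a - F b) * (F a - F b) := sq _
    _ ≤ (F a - F b) * (K * (a - b)) := mul_le_mul_of_nonneg_left hbound hF
    _ = K * ((F a - F b) * (a - b)) := by ring

theorem mul_sub_le_of_sq_le_mul {K D t : ℝ} (hK : 0 ≤ K) (hD : D ^ 2 ≤ K * (D * t)) (v : ℝ) :
    D * (v - t) ≤ K / 4 * v ^ 2 := by
  obtain rfl | hK := hK.eq_or_lt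
  · obtain rfl : D = 0 := by nlinarith
    simp
  · refine le_of_mul_le_mul_left ?_ hK
    linarith [sq_nonneg (D - K * v / 2)]

theorem lipschitzOnWith_exp_Iic (M : ℝ) :
    LipschitzOnWith (Real.exp M).toNNReal Real.exp (Set.Iic M) := by
  refine (convex_Iic M).lipschitzOnWith_of_nnnorm_deriv_le
    (fun _ _ => Real.differentiableAt_exp) fun x hx => ?_
  rw [Real.deriv_exp, Real.nnnorm_of_nonneg (Real.exp_pos x).le,
    ← Real.toNNReal_of_nonneg]
  exact Real.toNNReal_le_toNNReal (Real.exp_le_exp.2 hx)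

section TorusCalculus

variable {d : ℕ} {E : Type*} [NormedAddCommGroup E]

theorem euclNorm_sq (v : Fin d → ℝ) : euclNorm v ^ 2 = dotP v v := by
  rw [euclNorm, Real.sq_sqrt (Finset.sum_nonneg fun i _ => sq_nonneg (v i))]
  simp only [dotP, sq]

theorem torusMeasure_eq_restrict_Icc (d : ℕ) :
    torusMeasure d = volume.restrict (Set.Icc (fun _ => (0 : ℝ)) fun _ => 1) :=
  Measure.restrict_congr_set Measure.univ_pi_Ico_ae_eq_Icc

theorem integrable_torusMeasure_of_continuous {f : (Fin d → ℝ) → E} (hf : Continuous f) :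
    Integrable f (torusMeasure d) := by
  rw [torusMeasure_eq_restrict_Icc]
  exact hf.continuousOn.integrableOn_compact isCompact_Icc

theorem contDiff_grad {n : WithTop ℕ∞} {U : (Fin d → ℝ) → ℝ} (hU : ContDiff ℝ (n + 1) U) :
    ContDiff ℝ n (grad U) :=
  contDiff_pi.2 fun _ => (hU.fderiv_right le_rfl).clm_apply contDiff_const

theorem contDiff_grad_apply {n : WithTop ℕ∞} {U : (Fin d → ℝ) → ℝ} (hU : ContDiff ℝ (n + 1) U)
    (i : Fin d) : ContDiff ℝ n fun x => grad U x i :=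
  contDiff_pi.1 (contDiff_grad hU) i

theorem continuous_lap_s9 {U : (Fin d → ℝ) → ℝ} (hU : ContDiff ℝ 2 U) : Continuous (lap U) :=
  continuous_finsetSum _ fun i _ =>
    ((contDiff_grad_apply (n := 1) hU i).continuous_fderiv one_ne_zero).clm_apply continuous_const

theorem grad_sub {U V : (Fin d → ℝ) → ℝ} {x : Fin d → ℝ} (hU : DifferentiableAt ℝ U x)
    (hV : DifferentiableAt ℝ V x) : grad (U - V) x = grad U x - grad V x := by
  ext i
  simp only [grad, fderiv_sub hU hV, sub_apply, Pi.sub_apply]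

theorem lap_sub {U V : (Fin d → ℝ) → ℝ} (hU : ContDiff ℝ 2 U) (hV : ContDiff ℝ 2 V)
    (x : Fin d → ℝ) : lap (U - V) x = lap U x - lap V x := by
  have hpartial : ∀ i, (fun y => grad (U - V) y i) = fun y => grad U y i - grad V y i :=
    fun i => funext fun y => congrFun
      (grad_sub (hU.differentiable two_ne_zero y) (hV.differentiable two_ne_zero y)) i
  calc lap (U - V) x = ∑ i, fderiv ℝ (fun y => grad (U - V) y i) x (Pi.single i 1) := rfl
    _ = ∑ i, (fderiv ℝ (fun y => grad U y i) x (Pi.single i 1) -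
          fderiv ℝ (fun y => grad V y i) x (Pi.single i 1)) := by
      refine Finset.sum_congr rfl fun i _ => ?_
      rw [hpartial, fderiv_fun_sub
        ((contDiff_grad_apply (n := 1) hU i).differentiable one_ne_zero x)
        ((contDiff_grad_apply (n := 1) hV i).differentiable one_ne_zero x), sub_apply]
    _ = lap U x - lap V x := Finset.sum_sub_distrib _ _

theorem ZPeriodic.sub {α : Type*} [Sub α] {f g : (Fin d → ℝ) → α} (hf : ZPeriodic f)
    (hg : ZPeriodic g) : ZPeriodic (f - g) :=
  fun x k => by simp only [Pi.sub_apply, hf x k, hg x k]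

theorem ZPeriodic.grad {U : (Fin d → ℝ) → ℝ} (hU : ZPeriodic U) : ZPeriodic (grad U) := by
  intro x k
  have hshift : (fun y => U (y + latVec k)) = U := funext fun y => hU y k
  ext i
  simp only [_root_.grad, ← fderiv_comp_add_right, hshift]

theorem ZPeriodic.insertNth_one_eq_insertNth_zero {n : ℕ} {α : Type*}
    {f : (Fin (n + 1) → ℝ) → α} (hf : ZPeriodic f) (i : Fin (n + 1)) (y : Fin n → ℝ) :
    f (i.insertNth 1 y) = f (i.insertNth 0 y) := by
  have hshift : (i.insertNth 1 y : Fin (n + 1) → ℝ) =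
      i.insertNth 0 y + latVec (Pi.single i 1) := by
    ext j
    cases j using Fin.succAboveCases i <;> simp [latVec]
  rw [hshift, hf]

theorem integral_divergence_torusMeasure_eq_zero [NormedSpace ℝ E]
    {G : Fin d → (Fin d → ℝ) → E} (hG : ∀ i, ContDiff ℝ 1 (G i)) (hper : ∀ i, ZPeriodic (G i)) :
    ∫ x, ∑ i, fderiv ℝ (G i) x (Pi.single i 1) ∂(torusMeasure d) = 0 := by
  rcases d with _ | n
  · simp
  have hdiv : Continuous fun x => ∑ i, fderiv ℝ (G i) x (Pi.single i 1) :=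
    continuous_finsetSum _ fun i _ =>
      ((hG i).continuous_fderiv one_ne_zero).clm_apply continuous_const
  rw [torusMeasure_eq_restrict_Icc, integral_divergence_of_hasFDerivAt_off_countable'
    (fun _ => 0) (fun _ => 1) (fun _ => zero_le_one) G (fun i => fderiv ℝ (G i)) ∅
    countable_empty (fun i => (hG i).continuous.continuousOn)
    (fun x _ i => ((hG i).differentiable one_ne_zero x).hasFDerivAt)
    (hdiv.continuousOn.integrableOn_compact isCompact_Icc)]
  exact Finset.sum_eq_zero fun i _ => by
    simp only [(hper i).insertNth_one_eq_insertNth_zero, sub_self]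

theorem integral_dotP_grad_eq_neg_integral_mul_lap {u v : (Fin d → ℝ) → ℝ} (hu : ContDiff ℝ 1 u)
    (hv : ContDiff ℝ 2 v) (hup : ZPeriodic u) (hvp : ZPeriodic v) :
    ∫ x, dotP (grad u x) (grad v x) ∂(torusMeasure d) =
      -∫ x, u x * lap v x ∂(torusMeasure d) := by
  have hgu : ∀ i, Continuous fun x => grad u x i :=
    fun i => (contDiff_grad_apply (n := 0) (by simpa using hu) i).continuous
  have hgv : ∀ i, ContDiff ℝ 1 fun x => grad v x i := contDiff_grad_apply hv
  have hdiv : ∀ x, ∑ i, fderiv ℝ (fun y => u y * grad v y i) x (Pi.single i 1) =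
      dotP (grad u x) (grad v x) + u x * lap v x := by
    intro x
    rw [dotP, lap, Finset.mul_sum, ← Finset.sum_add_distrib]
    refine Finset.sum_congr rfl fun i _ => ?_
    rw [fderiv_fun_mul (hu.differentiable one_ne_zero x) ((hgv i).differentiable one_ne_zero x)]
    simp only [grad, add_apply, smul_apply, smul_eq_mul]
    ring
  have hdot : Integrable (fun x => dotP (grad u x) (grad v x)) (torusMeasure d) :=
    integrable_torusMeasure_of_continuous <|
      continuous_finsetSum _ fun i _ => (hgu i).mul (hgv i).continuous
  have hmul : Integrable (fun x => u x * lap v x) (torusMeasure d) :=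
    integrable_torusMeasure_of_continuous (hu.continuous.mul (continuous_lap_s9 hv))
  rw [eq_neg_iff_add_eq_zero, ← integral_add hdot hmul]
  simp only [← hdiv]
  exact integral_divergence_torusMeasure_eq_zero (fun i => hu.mul (hgv i))
    fun i x k => by simp only [hup x k, hvp.grad x k]

end TorusCalculus

theorem statement9_general {d : ℕ} {F : ℝ → ℝ} {s : Set ℝ} {K : NNReal} (hmono : MonotoneOn F s)
    (hlip : LipschitzOnWith K F s) {κ : ℝ} {V₁ V₂ U₁ U₂ ρ : (Fin d → ℝ) → ℝ}
    (hV : Integrable (fun x => (V₁ x - V₂ x) ^ 2) (torusMeasure d))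
    (hU₁ : ContDiff ℝ 2 U₁) (hU₂ : ContDiff ℝ 2 U₂) (hp₁ : ZPeriodic U₁) (hp₂ : ZPeriodic U₂)
    (hs₁ : ∀ x, V₁ x + U₁ x ∈ s) (hs₂ : ∀ x, V₂ x + U₂ x ∈ s)
    (heq₁ : ∀ x, κ * lap U₁ x = F (V₁ x + U₁ x) - ρ x)
    (heq₂ : ∀ x, κ * lap U₂ x = F (V₂ x + U₂ x) - ρ x) :
    κ * ∫ x, euclNorm (grad U₁ x - grad U₂ x) ^ 2 ∂(torusMeasure d) ≤
      K / 4 * ∫ x, (V₁ x - V₂ x) ^ 2 ∂(torusMeasure d) := by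
  set w := U₁ - U₂ with hw_def
  have hw : ContDiff ℝ 2 w := hU₁.sub hU₂
  have hgrad : ∀ x, grad U₁ x - grad U₂ x = grad w x := fun x =>
    (grad_sub (hU₁.differentiable two_ne_zero x) (hU₂.differentiable two_ne_zero x)).symm
  have hlap : ∀ x, κ * lap w x = F (V₁ x + U₁ x) - F (V₂ x + U₂ x) := fun x => by
    rw [lap_sub hU₁ hU₂]
    linarith [heq₁ x, heq₂ x]
  have hpoint : ∀ x, -κ * (w x * lap w x) ≤ K / 4 * (V₁ x - V₂ x) ^ 2 := fun x =>
    calc -κ * (w x * lap w x) = -(κ * lap w x) * w x := by ring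
      _ = (F (V₁ x + U₁ x) - F (V₂ x + U₂ x)) *
            (V₁ x - V₂ x - (V₁ x + U₁ x - (V₂ x + U₂ x))) := by
        rw [hlap, hw_def, Pi.sub_apply]
        ring
      _ ≤ K / 4 * (V₁ x - V₂ x) ^ 2 := mul_sub_le_of_sq_le_mul K.coe_nonneg
        (sq_sub_le_mul_of_monotoneOn_of_lipschitzOnWith hmono hlip (hs₁ x) (hs₂ x)) _
  calc κ * ∫ x, euclNorm (grad U₁ x - grad U₂ x) ^ 2 ∂(torusMeasure d)
      = κ * ∫ x, dotP (grad w x) (grad w x) ∂(torusMeasure d) := by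
        simp only [hgrad, euclNorm_sq]
    _ = ∫ x, -κ * (w x * lap w x) ∂(torusMeasure d) := by
        rw [integral_dotP_grad_eq_neg_integral_mul_lap (hw.of_le one_le_two) hw (hp₁.sub hp₂)
          (hp₁.sub hp₂), integral_const_mul]
        ring
    _ ≤ ∫ x, K / 4 * (V₁ x - V₂ x) ^ 2 ∂(torusMeasure d) :=
        integral_mono (integrable_torusMeasure_of_continuous
          (continuous_const.mul (hw.continuous.mul (continuous_lap_s9 hw)))) (hV.const_mul _) hpoint
    _ = K / 4 * ∫ x, (V₁ x - V₂ x) ^ 2 ∂(torusMeasure d) := integral_const_mul _ _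

/-- Stability estimate for the smooth parts: if `ε² Δ Û_i = e^{Ū_i+Û_i} − 1`
with `Ū_i` bounded continuous, then `ε² ‖∇Û₁ − ∇Û₂‖²_{L²} ≤ exp(C(maxᵢ sup|Ū_i| + maxᵢ
sup|Û_i|)) ‖Ū₁ − Ū₂‖²_{L²}` (stated with arbitrary upper bounds `M₁, M₂` for the sups). -/
theorem statement9 (d : ℕ) :
    ∃ C : ℝ, 0 < C ∧
      ∀ ε : ℝ, 0 < ε → ∀ M₁ M₂ : ℝ,
      ∀ Ubar₁ Ubar₂ Uhat₁ Uhat₂ : (Fin d → ℝ) → ℝ,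
        Continuous Ubar₁ → Continuous Ubar₂ →
        ZPeriodic Ubar₁ → ZPeriodic Ubar₂ →
        (∀ x, |Ubar₁ x| ≤ M₁) → (∀ x, |Ubar₂ x| ≤ M₁) →
        ContDiff ℝ 2 Uhat₁ → ContDiff ℝ 2 Uhat₂ →
        ZPeriodic Uhat₁ → ZPeriodic Uhat₂ →
        (∀ x, |Uhat₁ x| ≤ M₂) → (∀ x, |Uhat₂ x| ≤ M₂) →
        (∀ x, ε ^ 2 * lap Uhat₁ x = Real.exp (Ubar₁ x + Uhat₁ x) - 1) →
        (∀ x, ε ^ 2 * lap Uhat₂ x = Real.exp (Ubar₂ x + Uhat₂ x) - 1) →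
        ε ^ 2 * (∫ x, euclNorm (grad Uhat₁ x - grad Uhat₂ x) ^ 2 ∂(torusMeasure d)) ≤
          Real.exp (C * (M₁ + M₂)) *
            ∫ x, (Ubar₁ x - Ubar₂ x) ^ 2 ∂(torusMeasure d) := by
  refine ⟨1, one_pos, fun ε _ M₁ M₂ V₁ V₂ U₁ U₂ hV₁ hV₂ _ _ bV₁ bV₂ hU₁ hU₂ hp₁ hp₂ bU₁ bU₂
    heq₁ heq₂ => ?_⟩
  calc ε ^ 2 * ∫ x, euclNorm (grad U₁ x - grad U₂ x) ^ 2 ∂(torusMeasure d)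
      ≤ (Real.exp (M₁ + M₂)).toNNReal / 4 * ∫ x, (V₁ x - V₂ x) ^ 2 ∂(torusMeasure d) :=
        statement9_general (Real.exp_monotone.monotoneOn _) (lipschitzOnWith_exp_Iic (M₁ + M₂))
          (integrable_torusMeasure_of_continuous ((hV₁.sub hV₂).pow 2)) hU₁ hU₂ hp₁ hp₂
          (fun x => add_le_add (le_of_abs_le (bV₁ x)) (le_of_abs_le (bU₁ x)))
          (fun x => add_le_add (le_of_abs_le (bV₂ x)) (le_of_abs_le (bU₂ x))) heq₁ heq₂
    _ ≤ Real.exp (1 * (M₁ + M₂)) * ∫ x, (V₁ x - V₂ x) ^ 2 ∂(torusMeasure d) := by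
        rw [one_mul, Real.coe_toNNReal _ (Real.exp_pos _).le]
        gcongr
        linarith [Real.exp_pos (M₁ + M₂)]
end
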